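/- arXiv:1110.2351 — 2 statements merged into one kernel-verified Lean document; each statement's English description precedes it below -/
import Mathlib

section
/- For every Jordan curve C in the plane, the complement ℝ² \ C has exactly two connected components, one bounded and one unbounded, and C is the frontier (topological boundary) of each of these components (the Jordan curve theorem). -/
namespace JCT

open Set Filter Topology unitInterval

theorem lift_log {A : Type*} [TopologicalSpace A] (H : I × A → ℂ) (hH : Continuous H)
    (h0 : ∀ x, H x ≠ 0) (f : A → ℂ) (hf : Continuous f) (hHf : ∀ a, H (0, a) = Complex.exp (f a)) :
    ∃ L : A → ℂ, Continuous L ∧ ∀ a, Complex.exp (L a) = H (1, a) := by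
  let H' : C(I × A, {z : ℂ // z ≠ 0}) := ⟨fun x => ⟨H x, h0 x⟩, by fun_prop⟩
  have hh : ∀ a, H' (0, a) = (⟨_, Complex.exp_ne_zero (f a)⟩ : {z : ℂ // z ≠ 0}) :=
    fun a => Subtype.ext (hHf a)
  refine ⟨fun a => Complex.isCoveringMap_exp.liftHomotopy H' ⟨f, hf⟩ hh (1, a), by fun_prop, ?_⟩
  intro a
  have := congr_fun (Complex.isCoveringMap_exp.liftHomotopy_lifts H' ⟨f, hf⟩ hh) (1, a)
  exact congrArg Subtype.val this

theorem exp_unique {A : Type*} [TopologicalSpace A] [PreconnectedSpace A] (f g : A → ℂ)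
    (hf : Continuous f) (hg : Continuous g) (h : ∀ a, Complex.exp (f a) = Complex.exp (g a))
    (a : A) (ha : f a = g a) : f = g :=
  Complex.isCoveringMap_exp.eq_of_comp_eq hf hg (funext fun a => Subtype.ext (h a)) a ha

theorem log_of_vec {E : Type*} [AddCommGroup E] [Module ℝ E] [TopologicalSpace E]
    [ContinuousSMul ℝ E] (h : E → ℂ) (hc : Continuous h) (h0 : ∀ x, h x ≠ 0) :
    ∃ L : E → ℂ, Continuous L ∧ ∀ a, Complex.exp (L a) = h a := by
  obtain ⟨L, hL, hL'⟩ := lift_log (A := E) (fun x => h ((x.1 : ℝ) • x.2)) (by fun_prop)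
    (fun x => h0 _) (fun _ => Complex.log (h 0)) continuous_const
    (fun a => by simp [Complex.exp_log (h0 0)])
  exact ⟨L, hL, fun a => by simpa using hL' a⟩

/-- a nontrivial power of the circle has no periodic logarithm -/
theorem no_periodic_log (l : ℝ → ℂ) (hl : Continuous l) (q : ℤ) (hq : q ≠ 0) (c : ℂ)
    (h : ∀ t, Complex.exp (l t) = Complex.exp (c + q * (t * Complex.I)))
    (hp : l (2 * Real.pi) = l 0) : False := by
  have h2 := exp_unique l (fun t : ℝ => l 0 - c + (c + q * (t * Complex.I))) hl (by fun_prop)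
    (fun t => by
      rw [Complex.exp_add, ← h t, Complex.exp_sub, h 0]
      simp) 0 (by simp)
  have h3 := congr_fun h2 (2 * Real.pi)
  simp [hp] at h3
  have : (q : ℂ) * (2 * Real.pi * Complex.I) = 0 := by linear_combination -h3
  simp [hq, Real.pi_ne_zero] at this

theorem no_log (U : Set ℂ) (hU : IsOpen U) (hb : Bornology.IsBounded U) (a : ℂ) (ha : a ∈ U)
    (q : ℤ) (hq : q ≠ 0) (φ : ℂ → ℂ) (hφ : ContinuousOn φ (closure U))
    (hφ0 : ∀ z ∈ closure U, φ z ≠ 0) (g : ℂ → ℂ) (hg : Continuous g)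
    (h : ∀ z ∈ frontier U, φ z * Complex.exp (g z) = (z - a) ^ q) : False := by
  classical
  have hcl : closure Uᶜ = Uᶜ := hU.isClosed_compl.closure_eq
  let k : ℂ → ℂ := U.piecewise (fun z => φ z * Complex.exp (g z)) (fun z => (z - a) ^ q)
  have hk : Continuous k := by
    refine continuous_piecewise h (hφ.mul (by fun_prop)) ?_
    rw [hcl]
    intro z hz
    have : z - a ≠ 0 := by
      intro h
      rw [sub_eq_zero] at h
      exact hz (h ▸ ha)
    have hca : ContinuousAt (fun z : ℂ => z - a) z := by fun_prop
    exact (ContinuousAt.zpow₀ hca q (Or.inl this)).continuousWithinAt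
  have hk0 : ∀ z, k z ≠ 0 := by
    intro z
    by_cases hz : z ∈ U
    · simp only [k, piecewise_eq_of_mem _ _ _ hz]
      exact mul_ne_zero (hφ0 z (subset_closure hz)) (Complex.exp_ne_zero _)
    · simp only [k, piecewise_eq_of_notMem _ _ _ hz]
      apply zpow_ne_zero
      intro h
      rw [sub_eq_zero] at h
      exact hz (h ▸ ha)
  obtain ⟨L, hL, hLk⟩ := log_of_vec k hk hk0
  obtain ⟨R, hR0, hR⟩ := hb.subset_ball_lt 0 a
  refine no_periodic_log (fun t => L (a + R * Complex.exp (t * Complex.I))) (by fun_prop) q hq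
    (q * Complex.log R) (fun t => ?_) (by simp)
  rw [hLk]
  have hn : a + R * Complex.exp (t * Complex.I) ∉ U := by
    intro hm
    have := hR hm
    simp [abs_of_pos hR0, Complex.norm_exp_ofReal_mul_I] at this
  simp only [k, piecewise_eq_of_notMem _ _ _ hn]
  rw [← mul_add, Complex.exp_int_mul, Complex.exp_add, Complex.exp_log (by simpa using hR0.ne')]
  simp

/-- log of `(z-q)/(z-p)` off a path from `p` to `q`. -/
theorem log_off_path (γ : I → ℂ) (hγ : Continuous γ) :
    ∃ L : ℂ → ℂ, ContinuousOn L (range γ)ᶜ ∧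
      ∀ z ∈ (range γ)ᶜ, (z - γ 0) * Complex.exp (L z) = z - γ 1 := by
  classical
  have hne : ∀ (z : ((range γ)ᶜ : Set ℂ)) t, (z : ℂ) - γ t ≠ 0 := by
    intro z t h
    exact z.2 ⟨t, (sub_eq_zero.1 h).symm⟩
  obtain ⟨L, hL, hL'⟩ := lift_log (A := ((range γ)ᶜ : Set ℂ))
    (fun x => ((x.2 : ℂ) - γ x.1) / ((x.2 : ℂ) - γ 0))
    (Continuous.div (by fun_prop) (by fun_prop) (fun x => hne _ _))
    (fun x => div_ne_zero (hne _ _) (hne _ _)) (fun _ => 0) continuous_const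
    (fun a => by simp [div_self (hne a 0)])
  refine ⟨fun z => if h : z ∈ (range γ)ᶜ then L ⟨z, h⟩ else 0, ?_, ?_⟩
  · rw [continuousOn_iff_continuous_domRestrict]
    convert hL using 1
    ext z
    have := z.2
    simp only [domRestrict_apply, dif_pos this]
  · intro z hz
    simp only [dif_pos hz, hL']
    exact mul_div_cancel₀ _ (hne ⟨z, hz⟩ 0)

theorem no_log_pair (p q : ℂ) (hpq : p ≠ q) (L : ℂ → ℂ) (hL : ContinuousOn L {p, q}ᶜ)
    (h : ∀ z ∈ ({p, q}ᶜ : Set ℂ), (z - p) * Complex.exp (L z) = z - q) : False := by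
  have hd : p - q ≠ 0 := sub_ne_zero.2 hpq
  let d := p - q
  -- circle `z = p + d/2 e^{it}`
  let c : ℝ → ℂ := fun t => p + d / 2 * Complex.exp (t * Complex.I)
  have hc : Continuous c := by fun_prop
  have hcm : ∀ t, c t ∈ ({p, q}ᶜ : Set ℂ) := by
    intro t
    have h1 : c t ≠ p := by simp [c, d, hd]
    have h2 : c t ≠ q := by
      intro h
      have : d / 2 * Complex.exp (t * Complex.I) = - d := by
        simp only [c, d] at h ⊢
        linear_combination h
      have := congrArg norm this
      simp [Complex.norm_exp_ofReal_mul_I] at this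
      have := norm_pos_iff.2 hd
      simp only [d] at *
      linarith
    simp [h1, h2]
  have hs : ∀ t : ℝ, 1 + Complex.exp (t * Complex.I) / 2 ∈ Complex.slitPlane := by
    intro t
    left
    have h1 := Complex.abs_re_le_norm (Complex.exp (t * Complex.I) / 2)
    have h2 := neg_abs_le (Complex.exp (t * Complex.I) / 2).re
    simp only [norm_div, Complex.norm_exp_ofReal_mul_I] at h1
    rw [Complex.add_re, Complex.one_re]
    norm_num at h1 h2 ⊢
    linarith
  refine no_periodic_log (fun t => Complex.log (1 + Complex.exp (t * Complex.I) / 2) - L (c t))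
    (Continuous.sub (Continuous.clog (by fun_prop) hs) (hL.comp_continuous hc hcm)) 1 one_ne_zero
    (Complex.log (1 / 2)) (fun t => ?_) (by simp [c])
  have h1 := h (c t) (hcm t)
  rw [Complex.exp_sub, Complex.exp_log (Complex.slitPlane_ne_zero (hs t)), Complex.exp_add,
    Complex.exp_log (by norm_num), div_eq_iff (Complex.exp_ne_zero _)]
  have h2 : d * (Complex.exp (t * Complex.I) / 2 * Complex.exp (L (c t))) =
    d * (1 + Complex.exp (t * Complex.I) / 2) := by
    simp only [c, d] at h1 ⊢
    linear_combination h1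
  have h3 := mul_left_cancel₀ hd h2
  simp only [Int.cast_one, one_mul]
  linear_combination -h3

theorem glue (U V : Set ℂ) (hU : IsOpen U) (hV : IsOpen V) (hUV : IsConnected (U ∩ V)) (p q : ℂ)
    (hp : p ∉ U ∪ V) (LU LV : ℂ → ℂ)
    (hLU : ContinuousOn LU U) (hLV : ContinuousOn LV V)
    (eU : ∀ z ∈ U, (z - p) * Complex.exp (LU z) = z - q)
    (eV : ∀ z ∈ V, (z - p) * Complex.exp (LV z) = z - q) :
    ∃ L : ℂ → ℂ, ContinuousOn L (U ∪ V) ∧ ∀ z ∈ U ∪ V, (z - p) * Complex.exp (L z) = z - q := by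
  classical
  obtain ⟨z0, hz0⟩ := hUV.nonempty
  have hzp : ∀ z ∈ U ∪ V, z - p ≠ 0 := fun z hz h => hp (sub_eq_zero.1 h ▸ hz)
  have hexp : ∀ z ∈ U ∩ V, Complex.exp (LU z) = Complex.exp (LV z) := fun z hz =>
    mul_left_cancel₀ (hzp z (Or.inl hz.1)) ((eU z hz.1).trans (eV z hz.2).symm)
  let c := LU z0 - LV z0
  have hc : Complex.exp c = 1 := by
    rw [Complex.exp_sub, hexp z0 hz0, div_self (Complex.exp_ne_zero _)]
  have : PreconnectedSpace (U ∩ V : Set ℂ) := isPreconnected_iff_preconnectedSpace.1 hUV.isPreconnected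
  have key := exp_unique (A := (U ∩ V : Set ℂ)) (fun z => LU z) (fun z => LV z + c)
    ((hLU.mono inter_subset_left).domRestrict)
    (((hLV.mono inter_subset_right).domRestrict).add continuous_const)
    (fun z => by rw [Complex.exp_add, hc, mul_one]; exact hexp z z.2) ⟨z0, hz0⟩ (by simp [c])
  have key' : ∀ z ∈ U ∩ V, LU z = LV z + c := fun z hz => congr_fun key ⟨z, hz⟩
  let L : ℂ → ℂ := fun z => if z ∈ U then LU z else LV z + c
  have hLU' : EqOn L LU U := fun z hz => if_pos hz
  have hLV' : EqOn L (fun z => LV z + c) V := fun z hz => by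
    by_cases h : z ∈ U
    · simp only [L, if_pos h, key' z ⟨h, hz⟩]
    · simp only [L, if_neg h]
  refine ⟨L, ContinuousOn.union_of_isOpen (hLU.congr hLU')
    ((hLV.add continuousOn_const).congr hLV') hU hV, ?_⟩
  rintro z (hz | hz)
  · rw [hLU' hz, eU z hz]
  · rw [hLV' hz]
    simp only [Complex.exp_add, hc, mul_one, eV z hz]


theorem outside (R : ℝ) (hR : 0 < R) : IsPreconnected (Metric.closedBall (0 : ℂ) R)ᶜ := by
  have h : (Metric.closedBall (0 : ℂ) R)ᶜ = Complex.exp '' {w : ℂ | Real.log R < w.re} := by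
    ext z
    simp only [mem_compl_iff, mem_closedBall_zero_iff, not_le, mem_image, mem_ofPred_eq]
    constructor
    · intro hz
      have hz0 : z ≠ 0 := norm_pos_iff.1 (hR.trans hz)
      refine ⟨Complex.log z, ?_, Complex.exp_log hz0⟩
      rw [Complex.log_re]
      exact Real.log_lt_log hR hz
    · rintro ⟨w, hw, rfl⟩
      rw [Complex.norm_exp]
      exact (Real.log_lt_iff_lt_exp hR).1 hw
  rw [h]
  exact (convex_halfSpace_re_gt _).isPreconnected.image _ Complex.continuous_exp.continuousOn

theorem separates (e : AddCircle (1 : ℝ) → ℂ) (he : Continuous e) (hi : Function.Injective e)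
    : ¬ IsConnected (range e)ᶜ := by
  intro hconn
  let γ1 : I → ℂ := fun t => e (((t : ℝ) / 2 : ℝ) : AddCircle (1 : ℝ))
  let γ2 : I → ℂ := fun t => e ((1 - (t : ℝ) / 2 : ℝ) : AddCircle (1 : ℝ))
  have hq : Continuous (fun t : ℝ => (t : AddCircle (1 : ℝ))) := AddCircle.continuous_mk' 1
  have h1 : Continuous γ1 := he.comp (hq.comp (by fun_prop))
  have h2 : Continuous γ2 := he.comp (hq.comp (by fun_prop))
  have hp : γ2 0 = γ1 0 := by
    simp only [γ1, γ2]
    congr 1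
    have := AddCircle.coe_period (1 : ℝ)
    simp [this]
  have hq' : γ2 1 = γ1 1 := by
    simp only [γ1, γ2]
    norm_num
  obtain ⟨L1, hL1, e1⟩ := log_off_path γ1 h1
  obtain ⟨L2, hL2, e2⟩ := log_off_path γ2 h2
  rw [hp, hq'] at e2
  have hU1 : IsOpen (range γ1)ᶜ := (isCompact_range h1).isClosed.isOpen_compl
  have hU2 : IsOpen (range γ2)ᶜ := (isCompact_range h2).isClosed.isOpen_compl
  have hcover : (range γ1)ᶜ ∩ (range γ2)ᶜ = (range e)ᶜ := by
    rw [← compl_union]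
    congr 1
    apply subset_antisymm
    · rintro _ (⟨t, rfl⟩ | ⟨t, rfl⟩)
      · exact mem_range_self _
      · exact mem_range_self _
    · rintro _ ⟨x, rfl⟩
      obtain ⟨t, ht, rfl⟩ := AddCircle.eq_coe_Ico x
      rcases le_total t (1 / 2) with h | h
      · left
        refine ⟨⟨2 * t, by constructor <;> linarith [ht.1]⟩, ?_⟩
        simp [γ1]
      · right
        refine ⟨⟨2 * (1 - t), by constructor <;> linarith [ht.2]⟩, ?_⟩
        simp [γ2]
  have hinter : (range γ1)ᶜ ∪ (range γ2)ᶜ = {γ1 0, γ1 1}ᶜ := by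
    rw [← compl_inter]
    congr 1
    apply subset_antisymm
    · rintro z ⟨⟨s, hs⟩, ⟨t, ht⟩⟩
      have hst := hi (hs.trans ht.symm)
      have h0 : (((1 - (t : ℝ) / 2) - (s : ℝ) / 2 : ℝ) : AddCircle (1 : ℝ)) = 0 := by
        rw [AddCircle.coe_sub, hst, sub_self]
      obtain ⟨n, hn⟩ := AddCircle.coe_eq_zero_iff (1 : ℝ) |>.1 h0
      simp only [zsmul_eq_mul, mul_one] at hn
      have hs0 := s.2.1
      have hs1 := s.2.2
      have ht0 := t.2.1
      have ht1 := t.2.2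
      have hn0 : 0 ≤ n := by
        have : (0 : ℝ) ≤ n := by linarith
        exact_mod_cast this
      have hn1 : n ≤ 1 := by
        have : (n : ℝ) ≤ 1 := by linarith
        exact_mod_cast this
      rw [← hs]
      have hn2 : n = 0 ∨ n = 1 := by omega
      rcases hn2 with rfl | rfl
      · right
        have : s = 1 := Subtype.ext (by push_cast at hn ⊢; linarith)
        rw [this]; rfl
      · left
        have : s = 0 := Subtype.ext (by push_cast at hn ⊢; linarith)
        rw [this]
    · rintro z (rfl | rfl)
      · exact ⟨mem_range_self _, 0, hp⟩
      · exact ⟨mem_range_self _, 1, hq'⟩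
  have hne : γ1 0 ≠ γ1 1 := by
    intro h
    have := hi h
    rw [AddCircle.coe_eq_coe_iff_of_mem_Ico (a := 0) (by norm_num) (by norm_num)] at this
    norm_num at this
  obtain ⟨L, hL, hLe⟩ := glue _ _ hU1 hU2 (hcover ▸ hconn) (γ1 0) (γ1 1)
    (by rw [hinter]; simp) L1 L2 hL1 hL2 e1 e2
  rw [hinter] at hL hLe
  exact no_log_pair _ _ hne L hL hLe

theorem extend (e : AddCircle (1 : ℝ) → ℂ) (he : Continuous e) (hi : Function.Injective e)
    (G : AddCircle (1 : ℝ) → ℂ) (hG : Continuous G) :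
    ∃ g : ℂ → ℂ, Continuous g ∧ ∀ x, g (e x) = G x := by
  have hce : IsClosedEmbedding e := he.isClosedEmbedding hi
  obtain ⟨g, hg⟩ := ContinuousMap.exists_extension hce ⟨G, hG⟩
  exact ⟨g, g.continuous, fun x => DFunLike.congr_fun hg x⟩

theorem log_lift (e : AddCircle (1 : ℝ) → ℂ) (he : Continuous e) (hi : Function.Injective e)
    (a : ℂ) (ha : a ∉ range e) : ∃ (L : ℝ → ℂ) (n : ℤ), Continuous L ∧
    (∀ t : ℝ, Complex.exp (L t) = e t - a) ∧
    ∀ t, L (t + 1) = L t + n * (2 * Real.pi * Complex.I) := by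
  have hq : Continuous (fun t : ℝ => (t : AddCircle (1 : ℝ))) := AddCircle.continuous_mk' 1
  obtain ⟨L, hL, hL'⟩ := log_of_vec (fun t : ℝ => e t - a) ((he.comp hq).sub continuous_const)
    (fun t h => ha ⟨t, sub_eq_zero.1 h⟩)
  have h1 : Complex.exp (L (0 + 1)) = Complex.exp (L 0) := by
    rw [hL', hL']
    simp [AddCircle.coe_period (1 : ℝ)]
  obtain ⟨n, hn⟩ := Complex.exp_eq_exp_iff_exists_int.1 h1
  refine ⟨L, n, hL, hL', fun t => ?_⟩
  refine congr_fun (exp_unique (fun t => L (t + 1))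
    (fun t => L t + n * (2 * Real.pi * Complex.I)) (by fun_prop) (by fun_prop) ?_ 0 hn) t
  intro t
  rw [Complex.exp_add, Complex.exp_int_mul_two_pi_mul_I, hL', hL']
  simp [AddCircle.coe_period (1 : ℝ)]

theorem descend (e : AddCircle (1 : ℝ) → ℂ) (he : Continuous e) (hi : Function.Injective e)
    (G : ℝ → ℂ) (hG : Continuous G) (hp : ∀ t, G (t + 1) = G t) :
    ∃ g : ℂ → ℂ, Continuous g ∧ ∀ t : ℝ, g (e t) = G t := by
  have hp' : Function.Periodic G 1 := hp
  obtain ⟨g, hg, hge⟩ := extend e he hi hp'.lift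
    (continuous_quot_lift _ hG)
  exact ⟨g, hg, fun t => by rw [hge]; exact hp'.lift_coe t⟩

theorem two_bounded (e : AddCircle (1 : ℝ) → ℂ) (he : Continuous e) (hi : Function.Injective e)
    (U W : Set ℂ) (hU : IsOpen U) (hW : IsOpen W) (hd : Disjoint U W)
    (hUb : Bornology.IsBounded U) (hWb : Bornology.IsBounded W)
    (hfU : frontier U ⊆ range e) (hfW : frontier W ⊆ range e)
    (a b : ℂ) (ha : a ∈ U) (hb : b ∈ W) (hae : a ∉ range e) (hbe : b ∉ range e) : False := by
  obtain ⟨La, na, hLa, hLa', hna⟩ := log_lift e he hi a hae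
  obtain ⟨Lb, nb, hLb, hLb', hnb⟩ := log_lift e he hi b hbe
  have hlift : ∀ z ∈ range e, ∃ t : ℝ, e t = z := by
    rintro _ ⟨x, rfl⟩
    obtain ⟨t, ht, rfl⟩ := AddCircle.eq_coe_Ico x
    exact ⟨t, rfl⟩
  have hnb0 : nb ≠ 0 := by
    rintro rfl
    obtain ⟨g, hg, hge⟩ := descend e he hi Lb hLb (by simpa using hnb)
    refine no_log W hW hWb b hb 1 one_ne_zero (fun _ => 1) continuousOn_const (by simp) g hg ?_
    intro z hz
    obtain ⟨t, rfl⟩ := hlift z (hfW hz)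
    simp [hge, hLb']
  have hbU : b ∉ closure U := fun h => by
    have := (hd.symm.closure_right hW)
    exact (disjoint_left.1 this hb h)
  obtain ⟨g, hg, hge⟩ := descend e he hi (fun t => nb * La t - na * Lb t) (by fun_prop)
    (fun t => by simp only [hna, hnb]; ring)
  have hzb : ∀ z ∈ closure U, z - b ≠ 0 := fun z hz h => hbU (sub_eq_zero.1 h ▸ hz)
  refine no_log U hU hUb a ha nb hnb0 (fun z => (z - b) ^ na)
    (ContinuousOn.zpow₀ (by fun_prop) _ (fun z hz => Or.inl (hzb z hz)))
    (fun z hz => zpow_ne_zero _ (hzb z hz)) g hg ?_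
  intro z hz
  obtain ⟨t, rfl⟩ := hlift z (hfU hz)
  have := zpow_ne_zero na (hzb _ (frontier_subset_closure hz))
  rw [hge, Complex.exp_sub, Complex.exp_int_mul, Complex.exp_int_mul, hLa', hLb',
    mul_div_cancel₀ _ this]

theorem full_frontier (e : AddCircle (1 : ℝ) → ℂ) (he : Continuous e) (hi : Function.Injective e)
    (U : Set ℂ) (hU : IsOpen U) (hUb : Bornology.IsBounded U)
    (hfU : frontier U ⊆ range e) (a : ℂ) (ha : a ∈ U) (hae : a ∉ range e) :
    range e ⊆ frontier U := by
  rintro _ ⟨x, rfl⟩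
  by_contra hx
  obtain ⟨t0, -, rfl⟩ := AddCircle.eq_coe_Ico x
  obtain ⟨L, n, hL, hL', hn⟩ := log_lift e he hi a hae
  let K : Set (AddCircle (1 : ℝ)) := e ⁻¹' frontier U
  have hK : IsClosed K := isClosed_frontier.preimage he
  let G : K → ℂ := fun x => L (AddCircle.equivIco 1 t0 x)
  have hG : Continuous G := by
    rw [continuous_iff_continuousAt]
    intro x
    have hx0 : (x : AddCircle (1 : ℝ)) ≠ t0 := fun h => hx (by rw [← h]; exact x.2)
    have h1 := AddCircle.continuousAt_equivIco 1 t0 hx0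
    exact hL.continuousAt.comp (continuousAt_subtype_val.comp
      (ContinuousAt.comp (f := Subtype.val) h1 continuousAt_subtype_val))
  obtain ⟨G', hG'⟩ := ContinuousMap.exists_restrict_eq hK ⟨G, hG⟩
  obtain ⟨g, hg, hge⟩ := extend e he hi G' G'.continuous
  refine no_log U hU hUb a ha 1 one_ne_zero (fun _ => 1) continuousOn_const (by simp) g hg ?_
  intro z hz
  obtain ⟨y, rfl⟩ := hfU hz
  have : G' y = L (AddCircle.equivIco 1 t0 y) := DFunLike.congr_fun hG' ⟨y, hz⟩
  rw [hge, this, hL']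
  simp [AddCircle.coe_equivIco]

theorem main (e : AddCircle (1 : ℝ) → ℂ) (he : Continuous e) (hi : Function.Injective e)
    : ∃ U V : Set ℂ,
      IsOpen U ∧ IsOpen V ∧ IsConnected U ∧ IsConnected V ∧
      Disjoint U V ∧ U ∪ V = (range e)ᶜ ∧
      Bornology.IsBounded U ∧ ¬ Bornology.IsBounded V ∧
      frontier U = range e ∧ frontier V = range e := by
  have hcomp : IsCompact (range e) := isCompact_range he
  have hopen : IsOpen (range e)ᶜ := hcomp.isClosed.isOpen_compl
  obtain ⟨R, hR0, hR⟩ := hcomp.isBounded.subset_closedBall_lt 0 0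
  have hout : IsPreconnected (Metric.closedBall (0 : ℂ) R)ᶜ := outside R hR0
  have houtsub : (Metric.closedBall (0 : ℂ) R)ᶜ ⊆ (range e)ᶜ := compl_subset_compl.2 hR
  let w : ℂ := ((R + 1 : ℝ) : ℂ)
  have hw : w ∈ (Metric.closedBall (0 : ℂ) R)ᶜ := by
    simp only [w, mem_compl_iff, mem_closedBall_zero_iff, Complex.norm_real, Real.norm_eq_abs]
    rw [abs_of_pos (by linarith)]
    linarith
  let V := connectedComponentIn (range e)ᶜ w
  have hVout : (Metric.closedBall (0 : ℂ) R)ᶜ ⊆ V :=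
    hout.subset_connectedComponentIn hw houtsub
  have hVc : IsConnected V := isConnected_connectedComponentIn_iff.2 (houtsub hw)
  have hbdd : ∀ W : Set ℂ, Disjoint W V → Bornology.IsBounded W := fun W hW =>
    Metric.isBounded_closedBall.subset (fun z hz => by
      by_contra h
      exact disjoint_left.1 hW hz (hVout h))
  have hfr : ∀ x, frontier (connectedComponentIn (range e)ᶜ x) ⊆ range e := by
    intro x y hy
    by_contra hye
    have hyo : IsOpen (connectedComponentIn (range e)ᶜ y) := hopen.connectedComponentIn
    have hym : y ∈ connectedComponentIn (range e)ᶜ y := mem_connectedComponentIn hye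
    obtain ⟨z, hz1, hz2⟩ := mem_closure_iff.1 (frontier_subset_closure hy) _ hyo hym
    have h1 := connectedComponentIn_eq hz1
    have h2 := connectedComponentIn_eq hz2
    have hxo : IsOpen (connectedComponentIn (range e)ᶜ x) := hopen.connectedComponentIn
    rw [hxo.frontier_eq] at hy
    exact hy.2 (by rw [h2, ← h1]; exact hym)
  have hdisj : ∀ x y, y ∉ connectedComponentIn (range e)ᶜ x → y ∈ (range e)ᶜ →
      Disjoint (connectedComponentIn (range e)ᶜ y) (connectedComponentIn (range e)ᶜ x) := by
    intro x y hy hye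
    rw [disjoint_left]
    intro z hz1 hz2
    have h1 := connectedComponentIn_eq hz1
    have h2 := connectedComponentIn_eq hz2
    exact hy (by rw [h2, ← h1]; exact mem_connectedComponentIn hye)
  have hVsub : V ⊆ (range e)ᶜ := connectedComponentIn_subset _ _
  obtain ⟨a, hae, haV⟩ : ∃ a ∈ (range e)ᶜ, a ∉ V := by
    by_contra! hcon
    have : V = (range e)ᶜ := subset_antisymm hVsub hcon
    exact separates e he hi (this ▸ hVc)
  let U := connectedComponentIn (range e)ᶜ a
  have hUV : Disjoint U V := hdisj w a haV hae
  have haU : a ∈ U := mem_connectedComponentIn hae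
  have hUsub : U ⊆ (range e)ᶜ := connectedComponentIn_subset _ _
  have hUo : IsOpen U := hopen.connectedComponentIn
  have hVo : IsOpen V := hopen.connectedComponentIn
  refine ⟨U, V, hUo, hVo, isConnected_connectedComponentIn_iff.2 hae, hVc, hUV, ?_,
    hbdd U hUV, ?_, ?_, ?_⟩
  · refine subset_antisymm (union_subset hUsub hVsub) ?_
    intro b hbe
    by_contra hb
    rw [mem_union, not_or] at hb
    have hbU := hdisj a b hb.1 hbe
    have hbV := hdisj w b hb.2 hbe
    exact two_bounded e he hi U (connectedComponentIn (range e)ᶜ b) hUo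
      hopen.connectedComponentIn hbU.symm (hbdd U hUV) (hbdd _ hbV) (hfr a) (hfr b) a b haU
      (mem_connectedComponentIn hbe) hae hbe
  · intro hVb
    have h1 := hVb.subset hVout
    have h2 : Bornology.IsBounded (univ : Set ℂ) := by
      rw [← union_compl_self (Metric.closedBall (0 : ℂ) R)]
      exact Metric.isBounded_closedBall.union h1
    exact NormedSpace.unbounded_univ ℝ ℂ h2
  · exact subset_antisymm (hfr a) (full_frontier e he hi U hUo (hbdd U hUV) (hfr a) a haU hae)
  · refine subset_antisymm (hfr w) ?_
    have hsub : frontier (closure V)ᶜ ⊆ frontier V := by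
      rw [frontier_compl]
      exact frontier_closure_subset
    have haW : a ∈ (closure V)ᶜ := disjoint_left.1 (hUV.closure_right hUo) haU
    refine (full_frontier e he hi (closure V)ᶜ isClosed_closure.isOpen_compl
      (hbdd _ (disjoint_compl_left.mono_right subset_closure)) (hsub.trans (hfr w)) a haW hae).trans
      hsub

end JCT

/-- **The Jordan curve theorem.** If `C` is a Jordan curve in the plane (the image of a
continuous injective map from the unit circle into `ℝ²`), then the complement of `C` has
exactly two connected components: there are two disjoint nonempty open connected sets
`U` and `V` whose union is `ℝ² \ C`, with `U` bounded and `V` unbounded, and `C` is the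
frontier of each of them. -/
theorem jordan_curve_theorem (C : Set (EuclideanSpace ℝ (Fin 2)))
    (f : Metric.sphere (0 : EuclideanSpace ℝ (Fin 2)) 1 → EuclideanSpace ℝ (Fin 2))
    (hf : Continuous f) (hinj : Function.Injective f) (hC : C = Set.range f) :
    ∃ U V : Set (EuclideanSpace ℝ (Fin 2)),
      IsOpen U ∧ IsOpen V ∧ IsConnected U ∧ IsConnected V ∧
      Disjoint U V ∧ U ∪ V = Cᶜ ∧
      Bornology.IsBounded U ∧ ¬ Bornology.IsBounded V ∧
      frontier U = C ∧ frontier V = C := by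
  let Φ : ℂ ≃ₗᵢ[ℝ] EuclideanSpace ℝ (Fin 2) := Complex.orthonormalBasisOneI.repr
  let σ : AddCircle (1 : ℝ) ≃ₜ Circle := AddCircle.homeomorphCircle one_ne_zero
  let j : Circle → Metric.sphere (0 : EuclideanSpace ℝ (Fin 2)) 1 :=
    fun z => ⟨Φ z, by simpa using Circle.norm_coe z⟩
  have hj : Continuous j := (Φ.continuous.comp continuous_subtype_val).subtype_mk _
  have hji : Function.Injective j := fun x y h =>
    Subtype.ext (Φ.injective (congrArg Subtype.val h))
  have hjs : Function.Surjective j := by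
    intro x
    have hx : ‖Φ.symm x‖ = 1 := by simp
    refine ⟨⟨Φ.symm x, by simp [Submonoid.unitSphere]⟩, Subtype.ext ?_⟩
    simp [j]
  have hr : Set.range (fun x => Φ.symm (f (j (σ x)))) = Φ.symm '' C := by
    have : (fun x => Φ.symm (f (j (σ x)))) = Φ.symm ∘ f ∘ (j ∘ σ) := rfl
    rw [this, Set.range_comp, Set.range_comp, (hjs.comp σ.surjective).range_eq, Set.image_univ, hC]
  obtain ⟨U, V, hU, hV, hUc, hVc, hd, hun, hUb, hVb, hfU, hfV⟩ :=
    JCT.main (fun x => Φ.symm (f (j (σ x))))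
      (Φ.symm.continuous.comp (hf.comp (hj.comp σ.continuous)))
      (Φ.symm.injective.comp (hinj.comp (hji.comp σ.injective)))
  rw [hr] at hun hfU hfV
  let h : ℂ ≃ₜ EuclideanSpace ℝ (Fin 2) := Φ.toHomeomorph
  have hC' : h '' (Φ.symm '' C) = C := by
    rw [← Set.image_comp]
    have : (h ∘ Φ.symm) = id := by
      ext1 x
      exact Φ.apply_symm_apply x
    rw [this, Set.image_id]
  refine ⟨h '' U, h '' V, h.isOpenMap _ hU, h.isOpenMap _ hV,
    hUc.image _ h.continuous.continuousOn, hVc.image _ h.continuous.continuousOn,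
    (Set.disjoint_image_iff h.injective).2 hd, ?_, ?_, ?_, ?_, ?_⟩
  · rw [← Set.image_union, hun, Set.image_compl_eq h.bijective, hC']
  · exact Φ.lipschitz.isBounded_image hUb
  · intro hb
    apply hVb
    have := Φ.symm.lipschitz.isBounded_image hb
    rw [← Set.image_comp] at this
    have h2 : (Φ.symm ∘ h) = id := by
      ext1 x
      exact Φ.symm_apply_apply x
    rwa [h2, Set.image_id] at this
  · rw [← h.image_frontier, hfU, hC']
  · rw [← h.image_frontier, hfV, hC']
end

section
/- Let n ≥ 2 and let Σ be the image of a continuous injective map from the unit sphere S^{n-1} = {x ∈ ℝⁿ : |x| = 1} into ℝⁿ. Then the complement ℝⁿ \ Σ has exactly two connected components, one bounded and one unbounded, and Σ is the frontier (topological boundary) of each of these components (the Jordan–Brouwer separation theorem). -/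
namespace JB

/-- Mod 2 (possibly infinite) cubical chains on the grid: an even coordinate `2 * a` stands for the
point `a`, an odd coordinate `2 * a + 1` for the interval `[a, a+1]`. -/
abbrev Chain (n : ℕ) := (Fin n → ℤ) → ZMod 2

variable {n : ℕ}

lemma add_self (c : Chain n) : c + c = 0 := by
  funext w; exact CharTwo.add_self_eq_zero _

lemma eq_of_add_eq_zero {a b : Chain n} (h : a + b = 0) : a = b := by
  have : a + b + b = b := by rw [h, zero_add]
  rwa [add_assoc, add_self, add_zero] at this

/-- partial boundary in direction `i` -/
def bdi (i : Fin n) (c : Chain n) : Chain n := fun w =>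
  if Even (w i) then c (Function.update w i (w i + 1)) + c (Function.update w i (w i - 1)) else 0

/-- the boundary -/
def bd (c : Chain n) : Chain n := fun w => ∑ i, bdi i c w

lemma bdi_add (i : Fin n) (a b : Chain n) : bdi i (a + b) = bdi i a + bdi i b := by
  funext w
  simp only [bdi, Pi.add_apply]
  split_ifs
  · ring
  · simp

lemma bd_add (a b : Chain n) : bd (a + b) = bd a + bd b := by
  funext w
  simp [bd, bdi_add, Finset.sum_add_distrib]

lemma bd_zero : bd (0 : Chain n) = 0 := by
  funext w; simp [bd, bdi]

lemma bdi_bdi_self (i : Fin n) (c : Chain n) : bdi i (bdi i c) = 0 := by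
  funext w
  simp only [bdi, Function.update_self, Function.update_idem, Pi.zero_apply]
  split_ifs with h h1 h2 <;> first | rfl | (exfalso; grind)

lemma bdi_comm (i j : Fin n) (hij : i ≠ j) (c : Chain n) :
    bdi i (bdi j c) = bdi j (bdi i c) := by
  funext w
  simp only [bdi, Function.update_of_ne hij.symm, Function.update_of_ne hij]
  split_ifs
  · rw [Function.update_comm hij, Function.update_comm hij, Function.update_comm hij,
      Function.update_comm hij]; ring
  all_goals simp

lemma bdi_sum {ι : Type*} (i : Fin n) (s : Finset ι) (F : ι → Chain n) :
    bdi i (∑ j ∈ s, F j) = ∑ j ∈ s, bdi i (F j) := by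
  classical
  induction s using Finset.induction_on with
  | empty => funext w; simp [bdi]
  | insert a s ha ih => rw [Finset.sum_insert ha, Finset.sum_insert ha, bdi_add, ih]

lemma bd_eq_sum (c : Chain n) : bd c = ∑ i, bdi i c := by
  funext w; simp [bd]

lemma bd_bd (c : Chain n) : bd (bd c) = 0 := by
  rw [bd_eq_sum, bd_eq_sum]
  simp only [bdi_sum]
  rw [← Finset.sum_product']
  apply Finset.sum_involution (fun p _ => (p.2, p.1))
  · rintro ⟨i, j⟩ _
    by_cases h : i = j
    · subst h; simp [bdi_bdi_self]
    · simp only; rw [bdi_comm i j h]; exact add_self _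
  · rintro ⟨i, j⟩ _ hne h
    simp only [Prod.mk.injEq] at h
    apply hne; simp only; rw [h.1]; exact bdi_bdi_self _ _
  · simp
  · simp

/-- index of the parent cell -/
def par (z : ℤ) : ℤ := if z % 2 = 0 then z / 2 else 2 * (z / 4) + 1

/-- subdivision -/
def sd (c : Chain n) : Chain n := fun w =>
  if ∀ i, w i % 4 ≠ 2 then c (fun i => par (w i)) else 0

lemma sd_add (a b : Chain n) : sd (a + b) = sd a + sd b := by
  funext w
  simp only [sd, Pi.add_apply]
  split_ifs <;> simp

lemma sd_zero : sd (0 : Chain n) = 0 := by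
  funext w; simp [sd]

lemma par_update (w : Fin n → ℤ) (i : Fin n) (z : ℤ) :
    (fun j => par (Function.update w i z j)) = Function.update (fun j => par (w j)) i (par z) := by
  funext j
  by_cases h : j = i
  · subst h; simp
  · simp [h]

lemma forall_update (w : Fin n → ℤ) (i : Fin n) (z : ℤ) :
    (∀ j, Function.update w i z j % 4 ≠ 2) ↔ z % 4 ≠ 2 ∧ ∀ j, j ≠ i → w j % 4 ≠ 2 := by
  constructor
  · intro h
    refine ⟨by simpa using h i, fun j hj => by simpa [hj] using h j⟩
  · rintro ⟨h1, h2⟩ j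
    by_cases h : j = i
    · subst h; simpa using h1
    · simpa [h] using h2 j h

lemma forall_split (w : Fin n → ℤ) (i : Fin n) :
    (∀ j, w j % 4 ≠ 2) ↔ w i % 4 ≠ 2 ∧ ∀ j, j ≠ i → w j % 4 ≠ 2 := by
  have := forall_update w i (w i)
  rwa [Function.update_eq_self] at this

lemma bdi_sd (i : Fin n) (c : Chain n) : bdi i (sd c) = sd (bdi i c) := by
  funext w
  simp only [bdi, sd, forall_update, par_update]
  simp only [forall_split w i]
  by_cases hr : ∀ j, j ≠ i → w j % 4 ≠ 2
  · simp only [eq_true hr, and_true]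
    by_cases he : Even (w i)
    · have h1 : (w i + 1) % 4 ≠ 2 := by grind
      have h2 : (w i - 1) % 4 ≠ 2 := by grind
      simp only [he, h1, h2, if_true, ne_eq, not_false_eq_true]
      by_cases h4 : w i % 4 = 2
      · have : par (w i + 1) = par (w i - 1) := by simp only [par]; grind
        simp [h4, this, CharTwo.add_self_eq_zero]
      · have e1 : par (w i + 1) = par (w i) + 1 := by simp only [par]; grind
        have e2 : par (w i - 1) = par (w i) - 1 := by simp only [par]; grind
        have e3 : Even (par (w i)) := by simp only [par]; grind
        simp [h4, e1, e2, e3]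
    · have e3 : ¬ Even (par (w i)) := by simp only [par]; grind
      simp [he, e3]
  · simp only [eq_false hr, and_false, if_false, add_zero, ite_self]

lemma sd_sum {ι : Type*} (s : Finset ι) (F : ι → Chain n) :
    sd (∑ j ∈ s, F j) = ∑ j ∈ s, sd (F j) := by
  classical
  induction s using Finset.induction_on with
  | empty => simp [sd_zero]
  | insert a s ha ih => rw [Finset.sum_insert ha, Finset.sum_insert ha, sd_add, ih]

lemma bd_sd (c : Chain n) : bd (sd c) = sd (bd c) := by
  rw [bd_eq_sum, bd_eq_sum, sd_sum]
  exact Finset.sum_congr rfl fun i _ => bdi_sd i c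

lemma sdk_add (k : ℕ) (a b : Chain n) : sd^[k] (a + b) = sd^[k] a + sd^[k] b := by
  induction k generalizing a b with
  | zero => rfl
  | succ k ih => simp only [Function.iterate_succ_apply, sd_add, ih]

lemma sdk_zero (k : ℕ) : sd^[k] (0 : Chain n) = 0 := by
  induction k with
  | zero => rfl
  | succ k ih => rw [Function.iterate_succ_apply, sd_zero, ih]

lemma bd_sdk (k : ℕ) (c : Chain n) : bd (sd^[k] c) = sd^[k] (bd c) := by
  induction k generalizing c with
  | zero => rfl
  | succ k ih => rw [Function.iterate_succ_apply, Function.iterate_succ_apply, ih, bd_sd]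

/-- dimension of a cell -/
def dim (w : Fin n → ℤ) : ℕ := (Finset.univ.filter fun i => ¬ Even (w i)).card

/-- homogeneous chains -/
def Hom (d : ℕ) (c : Chain n) : Prop := ∀ w, c w ≠ 0 → dim w = d

lemma dim_update {w : Fin n → ℤ} {i : Fin n} {z : ℤ} (h : Even (w i)) (hz : ¬ Even z) :
    dim (Function.update w i z) = dim w + 1 := by
  unfold dim
  have : (Finset.univ.filter fun j => ¬ Even (Function.update w i z j)) =
      insert i (Finset.univ.filter fun j => ¬ Even (w j)) := by
    ext j
    by_cases hj : j = i
    · subst hj; simpa using hz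
    · simp [hj]
  rw [this, Finset.card_insert_of_notMem (by simp [h])]

lemma bd_ne_zero {c : Chain n} {w : Fin n → ℤ} (h : bd c w ≠ 0) :
    ∃ i z, Even (w i) ∧ (z = w i + 1 ∨ z = w i - 1) ∧ c (Function.update w i z) ≠ 0 := by
  obtain ⟨i, _, hi⟩ := Finset.exists_ne_zero_of_sum_ne_zero h
  simp only [bdi] at hi
  split_ifs at hi with he
  · by_cases h1 : c (Function.update w i (w i + 1)) = 0
    · rw [h1, zero_add] at hi
      exact ⟨i, _, he, Or.inr rfl, hi⟩
    · exact ⟨i, _, he, Or.inl rfl, h1⟩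
  · exact absurd rfl hi

lemma Hom.bd {d : ℕ} {c : Chain n} (h : Hom (d + 1) c) : Hom d (bd c) := by
  intro w hw
  obtain ⟨i, z, he, hz, hc⟩ := bd_ne_zero hw
  have := h _ hc
  rw [dim_update he (by grind)] at this
  omega

lemma Hom.sd {d : ℕ} {c : Chain n} (h : Hom d c) : Hom d (sd c) := by
  intro w hw
  simp only [JB.sd] at hw
  split_ifs at hw with h4
  · rw [← h _ hw]
    unfold dim
    congr 1
    ext i
    have := h4 i
    simp only [Finset.mem_filter, Finset.mem_univ, true_and, par]
    grind
  · exact absurd rfl hw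

lemma Hom.sdk {d : ℕ} (k : ℕ) {c : Chain n} (h : Hom d c) : Hom d (JB.sd^[k] c) := by
  induction k generalizing c with
  | zero => exact h
  | succ k ih => exact ih h.sd

end JB

namespace JB
variable {n : ℕ}

/-- closed cell of the grid of mesh `2 ^ (-m)` -/
def cell (m : ℕ) (w : Fin n → ℤ) : Set (Fin n → ℝ) :=
  {x | ∀ i, ((w i / 2 : ℤ) : ℝ) ≤ 2 ^ m * x i ∧ 2 ^ m * x i ≤ (((w i + 1) / 2 : ℤ) : ℝ)}

lemma isClosed_cell (m : ℕ) (w : Fin n → ℤ) : IsClosed (cell m w) := by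
  simp only [cell, Set.ofPred_forall, Set.ofPred_and]
  refine isClosed_iInter fun i => ?_
  exact (isClosed_le continuous_const (by fun_prop)).inter
    (isClosed_le (by fun_prop) continuous_const)

lemma dist_cell {m : ℕ} {w : Fin n → ℤ} {x y : Fin n → ℝ} (hx : x ∈ cell m w)
    (hy : y ∈ cell m w) : dist x y ≤ (1 / 2) ^ m := by
  refine (dist_pi_le_iff (by positivity)).2 fun i => ?_
  obtain ⟨h1, h2⟩ := hx i
  obtain ⟨h3, h4⟩ := hy i
  have h5 : (((w i + 1) / 2 : ℤ) : ℝ) ≤ ((w i / 2 : ℤ) : ℝ) + 1 := by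
    exact_mod_cast (by omega : (w i + 1) / 2 ≤ w i / 2 + 1)
  have hp : (0 : ℝ) < 2 ^ m := by positivity
  rw [one_div_pow, Real.dist_eq, le_div_iff₀ hp, ← abs_of_pos hp, ← abs_mul, abs_le]
  constructor <;> nlinarith

lemma finite_cells (m : ℕ) {A : Set (Fin n → ℝ)} (hA : Bornology.IsBounded A) :
    {w : Fin n → ℤ | ¬ Disjoint (cell m w) A}.Finite := by
  obtain ⟨R, hR⟩ := hA.subset_closedBall 0
  obtain ⟨N, hN⟩ := exists_nat_gt (2 ^ m * R)
  refine (Set.finite_Icc (fun _ : Fin n => (-(2 * N + 2) : ℤ)) (fun _ => (2 * N + 2 : ℤ))).subset ?_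
  intro w hw
  obtain ⟨x, hx, hxA⟩ := Set.not_disjoint_iff.1 hw
  have key : ∀ i, (-(2 * N + 2) : ℤ) ≤ w i ∧ w i ≤ (2 * N + 2 : ℤ) := by
    intro i
    have h1 : |x i| ≤ R := by
      have := hR hxA
      rw [mem_closedBall_zero_iff] at this
      exact (norm_le_pi_norm x i).trans this
    obtain ⟨h3, h4⟩ := abs_le.1 h1
    obtain ⟨h5, h6⟩ := hx i
    have hp : (0 : ℝ) < 2 ^ m := by positivity
    have h7 : ((w i / 2 : ℤ) : ℝ) < N := by nlinarith
    have h8 : (-N : ℝ) < (((w i + 1) / 2 : ℤ) : ℝ) := by nlinarith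
    have h9 : w i / 2 < N := by exact_mod_cast h7
    have h10 : (-N : ℤ) < (w i + 1) / 2 := by exact_mod_cast h8
    omega
  exact ⟨fun i => (key i).1, fun i => (key i).2⟩

/-- the chain `c` on the level `m` grid avoids `K` -/
def Avoid (m : ℕ) (c : Chain n) (K : Set (Fin n → ℝ)) : Prop :=
  ∀ w, c w ≠ 0 → Disjoint (cell m w) K

lemma Avoid.mono {m : ℕ} {c : Chain n} {K L : Set (Fin n → ℝ)} (h : Avoid m c L) (hKL : K ⊆ L) :
    Avoid m c K := fun w hw => (h w hw).mono_right hKL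

lemma Avoid.union {m : ℕ} {c : Chain n} {K L : Set (Fin n → ℝ)} (h : Avoid m c K)
    (h' : Avoid m c L) : Avoid m c (K ∪ L) := fun w hw =>
  Set.disjoint_union_right.2 ⟨h w hw, h' w hw⟩

lemma Avoid.add {m : ℕ} {a b : Chain n} {K : Set (Fin n → ℝ)} (h : Avoid m a K)
    (h' : Avoid m b K) : Avoid m (a + b) K := by
  intro w hw
  by_cases ha : a w = 0
  · exact h' w (by simpa [ha] using hw)
  · exact h w ha

lemma cell_face {m : ℕ} {w : Fin n → ℤ} {i : Fin n} {z : ℤ} (he : Even (w i))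
    (hz : z = w i + 1 ∨ z = w i - 1) : cell m w ⊆ cell m (Function.update w i z) := by
  intro x hx j
  by_cases hj : j = i
  · subst hj
    obtain ⟨h1, h2⟩ := hx j
    simp only [Function.update_self]
    have h3 : z / 2 ≤ w j / 2 := by grind
    have h4 : (w j + 1) / 2 ≤ (z + 1) / 2 := by grind
    exact ⟨le_trans (by exact_mod_cast h3) h1, h2.trans (by exact_mod_cast h4)⟩
  · simpa [hj] using hx j

lemma Avoid.bd {m : ℕ} {c : Chain n} {K : Set (Fin n → ℝ)} (h : Avoid m c K) :
    Avoid m (bd c) K := by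
  intro w hw
  obtain ⟨i, z, he, hz, hc⟩ := bd_ne_zero hw
  exact (h _ hc).mono_left (cell_face he hz)

lemma sd_ne_zero {c : Chain n} {w : Fin n → ℤ} (m : ℕ) (h : sd c w ≠ 0) :
    ∃ v, c v ≠ 0 ∧ cell (m + 1) w ⊆ cell m v := by
  simp only [sd] at h
  split_ifs at h with h4
  · refine ⟨_, h, fun x hx i => ?_⟩
    obtain ⟨h1, h2⟩ := hx i
    have h5 := h4 i
    have h6 : 2 * (par (w i) / 2) ≤ w i / 2 := by simp only [par]; grind
    have h7 : (w i + 1) / 2 ≤ 2 * ((par (w i) + 1) / 2) := by simp only [par]; grind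
    have h6' : (2 : ℝ) * ((par (w i) / 2 : ℤ) : ℝ) ≤ ((w i / 2 : ℤ) : ℝ) := by exact_mod_cast h6
    have h7' : (((w i + 1) / 2 : ℤ) : ℝ) ≤ (2 : ℝ) * (((par (w i) + 1) / 2 : ℤ) : ℝ) := by
      exact_mod_cast h7
    rw [pow_succ] at h1 h2
    constructor <;> linarith
  · exact absurd rfl h

lemma sdk_ne_zero {c : Chain n} {w : Fin n → ℤ} (m k : ℕ) (h : sd^[k] c w ≠ 0) :
    ∃ v, c v ≠ 0 ∧ cell (m + k) w ⊆ cell m v := by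
  induction k generalizing w with
  | zero => exact ⟨w, h, subset_rfl⟩
  | succ k ih =>
    rw [Function.iterate_succ_apply'] at h
    obtain ⟨v, hv, hs⟩ := sd_ne_zero (m + k) h
    obtain ⟨u, hu, hs'⟩ := ih hv
    exact ⟨u, hu, hs.trans hs'⟩

lemma Avoid.sdk {m : ℕ} {c : Chain n} {K : Set (Fin n → ℝ)} (k : ℕ) (h : Avoid m c K) :
    Avoid (m + k) (sd^[k] c) K := by
  intro w hw
  obtain ⟨v, hv, hs⟩ := sdk_ne_zero m k hw
  exact (h v hv).mono_left hs

/-- `z` bounds (after subdivision) in the complement of `K` -/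
def Bounds (m : ℕ) (z : Chain n) (K : Set (Fin n → ℝ)) : Prop :=
  ∃ (k : ℕ) (b : Chain n), Avoid (m + k) b K ∧ bd b = sd^[k] z

lemma Bounds.mono {m : ℕ} {c : Chain n} {K L : Set (Fin n → ℝ)} (h : Bounds m c L) (hKL : K ⊆ L) :
    Bounds m c K := by
  obtain ⟨k, b, h1, h2⟩ := h
  exact ⟨k, b, h1.mono hKL, h2⟩

lemma bounds_bd {m : ℕ} {b : Chain n} {K : Set (Fin n → ℝ)} (h : Avoid m b K) :
    Bounds m (bd b) K := ⟨0, b, h, rfl⟩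

/-- a bounding chain exists on all sufficiently fine levels -/
lemma Bounds.fine {m : ℕ} {z : Chain n} {K : Set (Fin n → ℝ)} (h : Bounds m z K) :
    ∃ k, ∀ l, k ≤ l → ∃ b, Avoid (m + l) b K ∧ JB.bd b = sd^[l] z := by
  obtain ⟨k, b, h1, h2⟩ := h
  refine ⟨k, fun l hl => ?_⟩
  obtain ⟨j, rfl⟩ := Nat.exists_eq_add_of_le hl
  refine ⟨sd^[j] b, ?_, ?_⟩
  · rw [← add_assoc]; exact h1.sdk j
  · rw [bd_sdk, h2, ← Function.iterate_add_apply, add_comm]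

lemma bounds_sdk {m k : ℕ} {z : Chain n} {K : Set (Fin n → ℝ)} :
    Bounds (m + k) (sd^[k] z) K ↔ Bounds m z K := by
  constructor
  · rintro ⟨j, b, h1, h2⟩
    refine ⟨k + j, b, by rwa [← add_assoc], ?_⟩
    rw [h2, ← Function.iterate_add_apply, add_comm]
  · intro h
    obtain ⟨k', h'⟩ := h.fine
    obtain ⟨b, h1, h2⟩ := h' (k + k') (by omega)
    refine ⟨k', b, by rwa [add_assoc], ?_⟩
    rw [h2, ← Function.iterate_add_apply, add_comm]

lemma Bounds.add {m : ℕ} {a b : Chain n} {K : Set (Fin n → ℝ)} (h : Bounds m a K)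
    (h' : Bounds m b K) : Bounds m (a + b) K := by
  obtain ⟨k, hk⟩ := h.fine
  obtain ⟨l, hl⟩ := h'.fine
  obtain ⟨e, h1, h2⟩ := hk (k + l) (by omega)
  obtain ⟨e', h3, h4⟩ := hl (k + l) (by omega)
  exact ⟨k + l, e + e', h1.add h3, by rw [bd_add, h2, h4, sdk_add]⟩

open Classical in
lemma split {m : ℕ} {c : Chain n} {A B : Set (Fin n → ℝ)} (hA : IsCompact A) (hB : IsCompact B)
    (h : Avoid m c (A ∩ B)) : ∃ (k : ℕ) (a b : Chain n), sd^[k] c = a + b ∧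
      Avoid (m + k) a A ∧ Avoid (m + k) b B ∧ ∀ w, a w ≠ 0 → sd^[k] c w ≠ 0 := by
  have hfin := finite_cells m hA.isBounded
  -- a scale for each cell
  have h1 : ∀ w, c w ≠ 0 → ∃ k : ℕ, ∀ x ∈ cell m w ∩ A, ∀ y ∈ cell m w ∩ B,
      (1 / 2 : ℝ) ^ k < dist x y := by
    intro w hw
    have hd : Disjoint (cell m w ∩ A) (cell m w ∩ B) := by
      rw [Set.disjoint_left]
      rintro x ⟨h1, h2⟩ ⟨_, h3⟩
      exact Set.disjoint_left.1 (h w hw) h1 ⟨h2, h3⟩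
    obtain ⟨r, hr, hr'⟩ := hd.exists_thickenings (hA.inter_left (isClosed_cell m w))
      (hB.inter_left (isClosed_cell m w)).isClosed
    obtain ⟨k, hk⟩ := exists_pow_lt_of_lt_one hr (by norm_num : (1 / 2 : ℝ) < 1)
    refine ⟨k, fun x hx y hy => hk.trans_le ?_⟩
    by_contra! hlt
    exact Set.disjoint_left.1 hr' (Metric.mem_thickening_iff.2 ⟨x, hx, by simpa using hr⟩ : x ∈ _)
      (Metric.mem_thickening_iff.2 ⟨y, hy, hlt⟩)
  choose! F hF using h1
  obtain ⟨k, hk⟩ := (hfin.image F).bddAbove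
  refine ⟨k, fun w => if Disjoint (cell (m + k) w) A then sd^[k] c w else 0,
    fun w => if Disjoint (cell (m + k) w) A then 0 else sd^[k] c w, ?_, ?_, ?_, ?_⟩
  · funext w
    simp only [Pi.add_apply]
    split_ifs <;> simp
  · intro w hw
    simp only at hw
    split_ifs at hw with hd
    · exact hd
    · exact absurd rfl hw
  · intro w hw
    simp only at hw
    split_ifs at hw with hd
    · exact absurd rfl hw
    · obtain ⟨v, hv, hs⟩ := sdk_ne_zero m k hw
      obtain ⟨x, hx, hxA⟩ := Set.not_disjoint_iff.1 hd
      rw [Set.disjoint_left]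
      intro y hy hyB
      have h2 := hF v hv x ⟨hs hx, hxA⟩ y ⟨hs hy, hyB⟩
      have h3 := dist_cell hx hy
      have h4 : F v ≤ k := hk ⟨v, Set.not_disjoint_iff.2 ⟨x, hs hx, hxA⟩, rfl⟩
      have h5 : (1 / 2 : ℝ) ^ (m + k) ≤ (1 / 2) ^ F v :=
        pow_le_pow_of_le_one (by norm_num) (by norm_num) (by omega)
      linarith
  · intro w hw
    simp only at hw
    split_ifs at hw with hd
    · exact hw
    · exact absurd rfl hw

/-- no cycle obstructs -/
def Acyclic (K : Set (Fin n → ℝ)) : Prop :=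
  ∀ m z, bd z = 0 → Avoid m z K → Bounds m z K

/-- Mayer–Vietoris gluing. -/
lemma glue {m : ℕ} {z a b : Chain n} {A B : Set (Fin n → ℝ)} (hA : IsCompact A) (hB : IsCompact B)
    (ha : Avoid m a A) (hb : Avoid m b B) (hza : bd a = z)
    (hab : Bounds m (a + b) (A ∩ B)) : Bounds m z (A ∪ B) := by
  obtain ⟨k, e, he, hbe⟩ := hab
  obtain ⟨l, eA, eB, hsum, hA', hB', _⟩ := split hA hB he
  refine ⟨k + l, sd^[k + l] a + bd eA, ?_, ?_⟩
  · have h1 : Avoid (m + (k + l)) (sd^[k + l] a + bd eA) A := by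
      refine (ha.sdk _).add ?_
      rw [← add_assoc]; exact hA'.bd
    have h2 : Avoid (m + (k + l)) (sd^[k + l] b + bd eB) B := by
      refine (hb.sdk _).add ?_
      rw [← add_assoc]; exact hB'.bd
    have h3 : sd^[k + l] a + bd eA = sd^[k + l] b + bd eB := by
      apply eq_of_add_eq_zero
      have h4 : bd (sd^[l] e) = sd^[l] (sd^[k] (a + b)) := by rw [bd_sdk, hbe]
      rw [hsum, bd_add, ← Function.iterate_add_apply, add_comm l k, sdk_add] at h4
      calc sd^[k + l] a + bd eA + (sd^[k + l] b + bd eB)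
          = (bd eA + bd eB) + (sd^[k + l] a + sd^[k + l] b) := by abel
        _ = 0 := by rw [h4]; exact add_self _
    rw [← h3] at h2
    exact h1.union h2
  · rw [bd_add, bd_bd, add_zero, bd_sdk, hza]

lemma glue' {m : ℕ} {z : Chain n} {A B : Set (Fin n → ℝ)} (hA : IsCompact A) (hB : IsCompact B)
    (h : Acyclic (A ∩ B)) (ha : Bounds m z A) (hb : Bounds m z B) : Bounds m z (A ∪ B) := by
  obtain ⟨k, hk⟩ := ha.fine
  obtain ⟨l, hl⟩ := hb.fine
  obtain ⟨a, h1, h2⟩ := hk (k + l) (by omega)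
  obtain ⟨b, h3, h4⟩ := hl (k + l) (by omega)
  rw [← bounds_sdk (k := k + l)]
  refine glue hA hB h1 h3 h2 (h _ _ ?_ ?_)
  · rw [bd_add, h2, h4, add_self]
  · exact (h1.mono Set.inter_subset_left).add (h3.mono Set.inter_subset_right)

/-- continuity: bounding off an intersection of a decreasing family of compact sets -/
lemma bounds_iInter {m : ℕ} {z : Chain n} {D : ℕ → Set (Fin n → ℝ)} (hD : ∀ j, IsCompact (D j))
    (hanti : Antitone D) (h : Bounds m z (⋂ j, D j)) : ∃ j, Bounds m z (D j) := by
  obtain ⟨k, b, h1, h2⟩ := h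
  have hfin := finite_cells (m + k) (hD 0).isBounded
  have h3 : ∀ w, b w ≠ 0 → ∃ j, Disjoint (cell (m + k) w) (D j) := by
    intro w hw
    by_contra! hcon
    have := IsCompact.nonempty_iInter_of_sequence_nonempty_isCompact_isClosed
      (fun j => cell (m + k) w ∩ D j)
      (fun i => Set.inter_subset_inter_right _ (hanti (Nat.le_succ i)))
      (fun i => Set.not_disjoint_iff_nonempty_inter.1 (hcon i))
      ((hD 0).inter_left (isClosed_cell _ _))
      (fun i => (isClosed_cell _ _).inter (hD i).isClosed)
    obtain ⟨x, hx⟩ := this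
    rw [Set.mem_iInter] at hx
    exact Set.disjoint_left.1 (h1 w hw) (hx 0).1 (Set.mem_iInter.2 fun j => (hx j).2)
  choose! F hF using h3
  obtain ⟨j, hj⟩ := (hfin.image F).bddAbove
  refine ⟨j, k, b, ?_, h2⟩
  intro w hw
  by_cases hd : Disjoint (cell (m + k) w) (D 0)
  · exact hd.mono_right (hanti (Nat.zero_le _))
  · exact (hF w hw).mono_right (hanti (hj ⟨w, hd, rfl⟩))

end JB

namespace JB
variable {n : ℕ}

/-- the even integers strictly between `u` and `z` -/
noncomputable def btw (u z : ℤ) : Finset ℤ := (Finset.Ioo u z ∪ Finset.Ioo z u).filter Even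

/-- pushing cells to infinity in direction `i`, away from `u` -/
noncomputable def push (i : Fin n) (u : ℤ) (c : Chain n) : Chain n := fun w =>
  if Even (w i) then 0 else ∑ j ∈ btw u (w i), c (Function.update w i j)

/-- the projection -/
def proj (i : Fin n) (u : ℤ) (c : Chain n) : Chain n := fun w =>
  if Even (w i) then 0 else c (Function.update w i u)

lemma btw_self (u : ℤ) : btw u u = ∅ := by simp [btw]

lemma btw_up {u z : ℤ} (hz : Even z) (h : u < z) : btw u (z + 1) = insert z (btw u (z - 1)) := by
  ext j
  simp only [btw, Finset.mem_filter, Finset.mem_union, Finset.mem_Ioo, Finset.mem_insert]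
  grind

lemma btw_down {u z : ℤ} (hz : Even z) (h : z < u) : btw u (z - 1) = insert z (btw u (z + 1)) := by
  ext j
  simp only [btw, Finset.mem_filter, Finset.mem_union, Finset.mem_Ioo, Finset.mem_insert]
  grind

lemma sum_btw_even {u z : ℤ} (hu : ¬ Even u) (hz : Even z) (g : ℤ → ZMod 2) :
    ∑ j ∈ btw u (z + 1), g j + ∑ j ∈ btw u (z - 1), g j = g z := by
  rcases lt_trichotomy u z with h | h | h
  · rw [btw_up hz h, Finset.sum_insert, add_assoc, CharTwo.add_self_eq_zero, add_zero]
    simp only [btw, Finset.mem_filter, Finset.mem_union, Finset.mem_Ioo]; grind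
  · exact absurd (h ▸ hz) hu
  · rw [btw_down hz h, Finset.sum_insert, add_left_comm, CharTwo.add_self_eq_zero, add_zero]
    simp only [btw, Finset.mem_filter, Finset.mem_union, Finset.mem_Ioo]; grind

lemma sum_btw_tele_up {u : ℤ} (hu : ¬ Even u) (g : ℤ → ZMod 2) (k : ℕ) :
    ∑ j ∈ btw u (u + 2 * k), (g (j + 1) + g (j - 1)) = g (u + 2 * k) + g u := by
  induction k with
  | zero => simp [btw_self, CharTwo.add_self_eq_zero]
  | succ k ih =>
    have h1 : u + 2 * ((k + 1 : ℕ) : ℤ) = (u + 2 * k + 1) + 1 := by push_cast; ring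
    rw [h1, btw_up (by grind) (by omega), Finset.sum_insert]
    · rw [show u + 2 * (k : ℤ) + 1 - 1 = u + 2 * k by ring, ih]
      rw [add_assoc, ← add_assoc (g (u + 2 * k)), CharTwo.add_self_eq_zero, zero_add]
    · simp only [btw, Finset.mem_filter, Finset.mem_union, Finset.mem_Ioo]; grind

lemma sum_btw_tele_down {u : ℤ} (hu : ¬ Even u) (g : ℤ → ZMod 2) (k : ℕ) :
    ∑ j ∈ btw u (u - 2 * k), (g (j + 1) + g (j - 1)) = g (u - 2 * k) + g u := by
  induction k with
  | zero => simp [btw_self, CharTwo.add_self_eq_zero]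
  | succ k ih =>
    have h1 : u - 2 * ((k + 1 : ℕ) : ℤ) = (u - 2 * k - 1) - 1 := by push_cast; ring
    rw [h1, btw_down (by grind) (by omega), Finset.sum_insert]
    · rw [show u - 2 * (k : ℤ) - 1 + 1 = u - 2 * k by ring, ih]
      rw [add_comm (g (u - 2 * k)), add_assoc, ← add_assoc (g (u - 2 * k)),
        CharTwo.add_self_eq_zero, zero_add]
    · simp only [btw, Finset.mem_filter, Finset.mem_union, Finset.mem_Ioo]; grind

lemma sum_btw_odd {u z : ℤ} (hu : ¬ Even u) (hz : ¬ Even z) (g : ℤ → ZMod 2) :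
    ∑ j ∈ btw u z, (g (j + 1) + g (j - 1)) = g z + g u := by
  rcases le_total u z with h | h
  · obtain ⟨k, hk⟩ : ∃ k : ℕ, z = u + 2 * k := ⟨((z - u) / 2).toNat, by grind⟩
    rw [hk]; exact sum_btw_tele_up hu g k
  · obtain ⟨k, hk⟩ : ∃ k : ℕ, z = u - 2 * k := ⟨((u - z) / 2).toNat, by grind⟩
    rw [hk]; exact sum_btw_tele_down hu g k

lemma bdi_push_self (i : Fin n) {u : ℤ} (hu : ¬ Even u) (c : Chain n) :
    bdi i (push i u c) + push i u (bdi i c) = c + proj i u c := by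
  funext w
  simp only [Pi.add_apply, bdi, push, proj, Function.update_self, Function.update_idem]
  by_cases he : Even (w i)
  · have h1 : ¬ Even (w i + 1) := by grind
    have h2 : ¬ Even (w i - 1) := by grind
    simp only [he, h1, h2, if_true, if_false, add_zero]
    rw [sum_btw_even hu he (fun j => c (Function.update w i j)), Function.update_eq_self]
  · simp only [he, if_false, zero_add]
    have h3 : ∀ j ∈ btw u (w i), (if Even j then c (Function.update w i (j + 1)) +
        c (Function.update w i (j - 1)) else 0) = c (Function.update w i (j + 1)) +
        c (Function.update w i (j - 1)) := by
      intro j hj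
      rw [if_pos (Finset.mem_filter.1 hj).2]
    rw [Finset.sum_congr rfl h3, sum_btw_odd hu he (fun j => c (Function.update w i j)),
      Function.update_eq_self]

lemma bdi_push_ne {i k : Fin n} (hik : k ≠ i) (u : ℤ) (c : Chain n) :
    bdi k (push i u c) = push i u (bdi k c) := by
  funext w
  simp only [bdi, push, Function.update_of_ne hik, Function.update_of_ne hik.symm]
  split_ifs
  · simp
  · rw [← Finset.sum_add_distrib]
    refine Finset.sum_congr rfl fun j _ => ?_
    rw [Function.update_comm hik, Function.update_comm hik]
  · rfl
  · simp

lemma push_add (i : Fin n) (u : ℤ) (a b : Chain n) :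
    push i u (a + b) = push i u a + push i u b := by
  funext w
  simp only [push, Pi.add_apply]
  split_ifs
  · simp
  · rw [Finset.sum_add_distrib]

lemma push_zero (i : Fin n) (u : ℤ) : push i u (0 : Chain n) = 0 := by
  funext w; simp [push]

lemma push_sum {ι : Type*} (i : Fin n) (u : ℤ) (s : Finset ι) (F : ι → Chain n) :
    push i u (∑ j ∈ s, F j) = ∑ j ∈ s, push i u (F j) := by
  classical
  induction s using Finset.induction_on with
  | empty => simp [push_zero]
  | insert a s ha ih => rw [Finset.sum_insert ha, Finset.sum_insert ha, push_add, ih]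

lemma bd_push (i : Fin n) {u : ℤ} (hu : ¬ Even u) (c : Chain n) :
    bd (push i u c) + push i u (bd c) = c + proj i u c := by
  rw [bd_eq_sum, bd_eq_sum, push_sum, ← Finset.sum_add_distrib, ← bdi_push_self i hu]
  refine Finset.sum_eq_single i (fun k _ hk => ?_) (by simp)
  rw [bdi_push_ne hk]; exact add_self _

lemma bd_push_cycle (i : Fin n) {u : ℤ} (hu : ¬ Even u) {c : Chain n} (hc : bd c = 0) :
    bd (push i u c) = c + proj i u c := by
  rw [← bd_push i hu, hc, push_zero, add_zero]

lemma push_ne_zero {i : Fin n} {u : ℤ} {c : Chain n} {w : Fin n → ℤ} (h : push i u c w ≠ 0) :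
    ¬ Even (w i) ∧ ∃ j ∈ btw u (w i), c (Function.update w i j) ≠ 0 := by
  simp only [push] at h
  split_ifs at h with he
  · exact absurd rfl h
  · exact ⟨he, Finset.exists_ne_zero_of_sum_ne_zero h⟩

lemma mem_cell_update {m : ℕ} {w : Fin n → ℤ} {i : Fin n} {j : ℤ} {x : Fin n → ℝ}
    (hx : x ∈ cell m w) (h1 : ((j / 2 : ℤ) : ℝ) ≤ 2 ^ m * x i)
    (h2 : 2 ^ m * x i ≤ (((j + 1) / 2 : ℤ) : ℝ)) : x ∈ cell m (Function.update w i j) := by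
  intro k
  by_cases hk : k = i
  · subst hk; simpa using ⟨h1, h2⟩
  · simpa [hk] using hx k

/-- the top-dimensional cell containing `p` -/
noncomputable def topc (m : ℕ) (p : Fin n → ℝ) : Fin n → ℤ := fun i => 2 * ⌊2 ^ m * p i⌋ + 1

lemma topc_odd (m : ℕ) (p : Fin n → ℝ) (i : Fin n) : ¬ Even (topc m p i) := by
  simp only [topc]; grind

lemma topc_le (m : ℕ) (p : Fin n → ℝ) (i : Fin n) :
    ((topc m p i / 2 : ℤ) : ℝ) ≤ 2 ^ m * p i := by
  have : topc m p i / 2 = ⌊2 ^ m * p i⌋ := by simp only [topc]; omega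
  rw [this]; exact Int.floor_le _

lemma le_topc (m : ℕ) (p : Fin n → ℝ) (i : Fin n) :
    2 ^ m * p i ≤ (((topc m p i + 1) / 2 : ℤ) : ℝ) := by
  have : (topc m p i + 1) / 2 = ⌊2 ^ m * p i⌋ + 1 := by simp only [topc]; omega
  rw [this]; push_cast; exact (Int.lt_floor_add_one _).le

lemma mem_topc (m : ℕ) (p : Fin n → ℝ) : p ∈ cell m (topc m p) :=
  fun i => ⟨topc_le m p i, le_topc m p i⟩

lemma Avoid.push {m : ℕ} {c : Chain n} {p : Fin n → ℝ} (i : Fin n) (h : Avoid m c {p}) :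
    Avoid m (push i (topc m p i) c) {p} := by
  intro w hw
  obtain ⟨he, j, hj, hc⟩ := push_ne_zero hw
  have h1 := h _ hc
  rw [Set.disjoint_singleton_right] at h1 ⊢
  intro hp
  apply h1
  have h2 := topc_le m p i
  have h3 := le_topc m p i
  obtain ⟨h4, h5⟩ := hp i
  have ho := topc_odd m p i
  simp only [btw, Finset.mem_filter, Finset.mem_union, Finset.mem_Ioo] at hj
  apply mem_cell_update hp
  · rcases hj.1 with h | h
    · have : j / 2 ≤ w i / 2 := by grind
      exact le_trans (by exact_mod_cast this) h4
    · have : j / 2 ≤ topc m p i / 2 := by grind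
      exact le_trans (by exact_mod_cast this) h2
  · rcases hj.1 with h | h
    · have : (topc m p i + 1) / 2 ≤ (j + 1) / 2 := by grind
      exact le_trans h3 (by exact_mod_cast this)
    · have : (w i + 1) / 2 ≤ (j + 1) / 2 := by grind
      exact le_trans h5 (by exact_mod_cast this)

lemma Avoid.proj {m : ℕ} {c : Chain n} {p : Fin n → ℝ} (i : Fin n) (h : Avoid m c {p}) :
    Avoid m (proj i (topc m p i) c) {p} := by
  intro w hw
  simp only [JB.proj] at hw
  split_ifs at hw with he
  · exact absurd rfl hw
  have h1 := h _ hw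
  rw [Set.disjoint_singleton_right] at h1 ⊢
  intro hp
  exact h1 (mem_cell_update hp (topc_le m p i) (le_topc m p i))

/-- the fundamental chain -/
def fund : Chain n := fun w => if ∀ i, ¬ Even (w i) then 1 else 0

lemma proj_cycle {i : Fin n} {u : ℤ} (hu : ¬ Even u) {c : Chain n} (hc : bd c = 0) :
    bd (proj i u c) = 0 := by
  have h := congrArg bd (bd_push_cycle i hu hc)
  rw [bd_bd, bd_add, hc, zero_add] at h
  exact h.symm

/-- every cycle is homologous to a multiple of the fundamental chain, with control of the
position relative to `p`. -/
lemma exists_push (m : ℕ) (p : Fin n → ℝ) (s : Finset (Fin n)) (z : Chain n) (hz : bd z = 0) :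
    ∃ b : Chain n, (Avoid m z {p} → Avoid m b {p}) ∧
      bd b = z + fun w => if ∀ i ∈ s, ¬ Even (w i) then
        z (fun i => if i ∈ s then topc m p i else w i) else 0 := by
  classical
  induction s using Finset.induction_on generalizing z with
  | empty =>
    refine ⟨0, fun _ w hw => absurd rfl hw, ?_⟩
    simp only [Finset.notMem_empty, false_imp_iff, implies_true, if_true, if_false]
    rw [bd_zero]; exact (add_self z).symm
  | insert i s hi ih =>
    obtain ⟨b, h1, h2⟩ := ih (proj i (topc m p i) z) (proj_cycle (topc_odd m p i) hz)
    refine ⟨push i (topc m p i) z + b, fun h => (h.push i).add (h1 (h.proj i)), ?_⟩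
    rw [bd_add, bd_push_cycle i (topc_odd m p i) hz, h2, add_assoc, ← add_assoc (proj _ _ _),
      add_self, zero_add]
    congr 1
    funext w
    have e1 : (fun j => if j ∈ insert i s then topc m p j else w j) =
        Function.update (fun j => if j ∈ s then topc m p j else w j) i (topc m p i) := by
      funext j
      by_cases hj : j = i
      · subst hj; simp
      · simp [hj]
    simp only [proj, hi, if_false, e1, Finset.forall_mem_insert]
    by_cases h3 : ∀ j ∈ s, ¬ Even (w j)
    · simp only [eq_true h3, if_true, and_true, ite_not]
    · simp only [eq_false h3, if_false, and_false]

lemma exists_push_univ (m : ℕ) (p : Fin n → ℝ) (z : Chain n) (hz : bd z = 0) :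
    ∃ b : Chain n, (Avoid m z {p} → Avoid m b {p}) ∧
      bd b = z + fun w => z (topc m p) * fund w := by
  obtain ⟨b, h1, h2⟩ := exists_push m p Finset.univ z hz
  refine ⟨b, h1, h2.trans ?_⟩
  congr 1
  funext w
  simp only [Finset.mem_univ, forall_const, if_true, fund, mul_ite, mul_one, mul_zero]

lemma acyclic_singleton (p : Fin n → ℝ) : Acyclic {p} := by
  intro m z hz ha
  obtain ⟨b, h1, h2⟩ := exists_push_univ m p z hz
  have h3 : z (topc m p) = 0 := by
    by_contra h
    exact Set.disjoint_singleton_right.1 (ha _ h) (mem_topc m p)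
  refine ⟨0, b, h1 ha, ?_⟩
  rw [h2, h3]
  funext w; simp

lemma bd_fund : bd (fund : Chain n) = 0 := by
  funext w
  simp only [bd, Pi.zero_apply]
  refine Finset.sum_eq_zero fun i _ => ?_
  simp only [bdi]
  split_ifs with he
  · have : ∀ z z' : ℤ, ¬ Even z → ¬ Even z' →
      (fund (Function.update w i z) = fund (Function.update w i z')) := by
      intro z z' hz hz'
      simp only [fund]
      congr 1
      apply propext
      refine forall_congr' fun j => ?_
      by_cases hj : j = i
      · subst hj; simp [hz, hz']
      · simp [hj]
    rw [this (w i + 1) (w i - 1) (by grind) (by grind)]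
    exact CharTwo.add_self_eq_zero _
  · rfl

lemma hom_fund : Hom n (fund : Chain n) := by
  intro w hw
  simp only [fund] at hw
  split_ifs at hw with h
  · unfold dim
    rw [Finset.filter_true_of_mem (fun i _ => h i)]; simp
  · exact absurd rfl hw

lemma sdk_fund (k : ℕ) : sd^[k] (fund : Chain n) = fund := by
  apply Function.iterate_fixed
  funext w
  simp only [sd, fund]
  have h1 : (∀ i, ¬ Even (w i)) → ∀ i, w i % 4 ≠ 2 := fun h i => by have := h i; grind
  have h2 : (∀ i, w i % 4 ≠ 2) → ((∀ i, ¬ Even (par (w i))) ↔ ∀ i, ¬ Even (w i)) := by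
    intro h
    refine forall_congr' fun i => ?_
    have := h i
    simp only [par]; grind
  by_cases h : ∀ i, w i % 4 ≠ 2
  · simp only [eq_true h, if_true, h2 h]
  · have : ¬ ∀ i, ¬ Even (w i) := fun h' => h (h1 h')
    simp only [eq_false h, eq_false this, if_false]

lemma fund_not_bounds (m : ℕ) (K : Set (Fin n → ℝ)) : ¬ Bounds m (fund : Chain n) K := by
  rintro ⟨k, b, _, h⟩
  rw [sdk_fund] at h
  have := congrFun h (fun _ => 1)
  simp [bd, bdi, fund] at this

/-- the complement of `K` has one-dimensional homology, generated in degree `d` -/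
def Spherical (K : Set (Fin n → ℝ)) (d : ℕ) : Prop :=
  ∃ (m : ℕ) (g : Chain n), bd g = 0 ∧ Hom d g ∧ Avoid m g K ∧ ¬ Bounds m g K ∧
    ∀ k z, bd z = 0 → Avoid (m + k) z K → Bounds (m + k) z K ∨ Bounds (m + k) (z + sd^[k] g) K

lemma spherical_empty : Spherical (∅ : Set (Fin n → ℝ)) n := by
  refine ⟨0, fund, bd_fund, hom_fund, fun w _ => by simp, fund_not_bounds _ _, fun k z hz _ => ?_⟩
  obtain ⟨b, _, h2⟩ := exists_push_univ (0 + k) 0 z hz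
  have hb : Bounds (0 + k) (bd b) ∅ := ⟨0, b, fun w _ => by simp, rfl⟩
  rw [h2] at hb
  rcases (by decide : ∀ t : ZMod 2, t = 0 ∨ t = 1) (z (topc (0 + k) 0)) with h | h
  · left
    rw [h] at hb
    convert hb using 1
    funext w; simp
  · right
    rw [h] at hb
    rw [sdk_fund]
    convert hb using 1
    funext w; simp

lemma spherical_union {A B : Set (Fin n → ℝ)} {d : ℕ} (hA : IsCompact A) (hB : IsCompact B)
    (aA : Acyclic A) (aB : Acyclic B) (h : Spherical (A ∩ B) (d + 1)) : Spherical (A ∪ B) d := by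
  obtain ⟨m, g, hg, hdeg, hav, hnb, hgen⟩ := h
  obtain ⟨l, a, b, hsum, ha, hb, hsub⟩ := split hA hB hav
  have hab : bd a = bd b := by
    apply eq_of_add_eq_zero
    rw [← bd_add, ← hsum, bd_sdk, hg, sdk_zero]
  have hda : Hom (d + 1) a := fun w hw => hdeg.sdk l w (hsub w hw)
  refine ⟨m + l, bd a, bd_bd a, hda.bd, ha.bd.union (hab ▸ hb.bd), ?_, ?_⟩
  · rintro ⟨k, e, he, hbe⟩
    apply hnb
    rw [← bounds_sdk (k := l), ← bounds_sdk (k := k), hsum, sdk_add]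
    have h1 : Bounds (m + l + k) (sd^[k] a + e) A := by
      apply aA
      · rw [bd_add, bd_sdk, hbe, add_self]
      · exact (ha.sdk k).add (he.mono Set.subset_union_left)
    have h2 : Bounds (m + l + k) (sd^[k] b + e) B := by
      apply aB
      · rw [bd_add, bd_sdk, hbe, hab, add_self]
      · exact (hb.sdk k).add (he.mono Set.subset_union_right)
    have h3 := (h1.mono Set.inter_subset_left).add (h2.mono (Set.inter_subset_right (s := A)))
    convert h3 using 1
    rw [add_add_add_comm, add_self, add_zero]
  · intro k z hz hzav
    obtain ⟨k1, hk1⟩ := (aA _ z hz (hzav.mono Set.subset_union_left)).fine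
    obtain ⟨k2, hk2⟩ := (aB _ z hz (hzav.mono Set.subset_union_right)).fine
    obtain ⟨a', ha', hba'⟩ := hk1 (k1 + k2) (by omega)
    obtain ⟨b', hb', hbb'⟩ := hk2 (k1 + k2) (by omega)
    set q := k1 + k2
    have hlev : m + l + k + q = m + (l + k + q) := by ring
    have hcyc : bd (a' + b') = 0 := by rw [bd_add, hba', hbb', add_self]
    have hav' : Avoid (m + l + k + q) (a' + b') (A ∩ B) :=
      (ha'.mono Set.inter_subset_left).add (hb'.mono Set.inter_subset_right)
    have hcase := hgen (l + k + q) (a' + b') hcyc (by rw [← hlev]; exact hav')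
    rw [← hlev] at hcase
    have hsg : sd^[l + k + q] g = sd^[q + k] a + sd^[q + k] b := by
      rw [show l + k + q = (q + k) + l by ring, Function.iterate_add_apply, hsum, sdk_add]
    rcases hcase with hc | hc
    · left
      rw [← bounds_sdk (k := q)]
      exact glue hA hB ha' hb' hba' hc
    · right
      rw [← bounds_sdk (k := q)]
      have e1 : m + l + k + q = m + l + (q + k) := by ring
      refine glue (a := a' + sd^[q + k] a) (b := b' + sd^[q + k] b) hA hB (ha'.add ?_) (hb'.add ?_)
        ?_ ?_
      · rw [e1]; exact ha.sdk _
      · rw [e1]; exact hb.sdk _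
      · rw [bd_add, hba', bd_sdk, sdk_add, Function.iterate_add_apply sd q k]
      · convert hc using 1
        rw [hsg, add_add_add_comm]

end JB

namespace JB
variable {n : ℕ}

lemma acyclic_succ {k : ℕ}
    (ih : ∀ (C : Set (Fin k → ℝ)) (φ : (Fin k → ℝ) → (Fin n → ℝ)), IsCompact C → Convex ℝ C →
      C.Nonempty → ContinuousOn φ C → Set.InjOn φ C → Acyclic (φ '' C))
    (C : Set (Fin (k + 1) → ℝ)) (φ : (Fin (k + 1) → ℝ) → (Fin n → ℝ)) (hC : IsCompact C)
    (hconv : Convex ℝ C) (hne : C.Nonempty) (hφ : ContinuousOn φ C) (hinj : Set.InjOn φ C) :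
    Acyclic (φ '' C) := by
  have hc0 : Continuous fun x : Fin (k + 1) → ℝ => x 0 := continuous_apply 0
  -- slabs
  let L : ℝ → ℝ → Set (Fin (k + 1) → ℝ) := fun s t => C ∩ {x | s ≤ x 0 ∧ x 0 ≤ t}
  have hLc : ∀ s t, IsCompact (L s t) := fun s t =>
    hC.inter_right ((isClosed_le continuous_const hc0).inter (isClosed_le hc0 continuous_const))
  have hDc : ∀ s t, IsCompact (φ '' L s t) := fun s t =>
    (hLc s t).image_of_continuousOn (hφ.mono Set.inter_subset_left)
  -- slices
  have hslice : ∀ t, (∃ x ∈ C, x 0 = t) → Acyclic (φ '' L t t) := by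
    rintro t ⟨x, hx, hxt⟩
    let C' : Set (Fin k → ℝ) := {y | Fin.cons t y ∈ C}
    have hC'c : C' = Fin.tail '' L t t := by
      ext y
      constructor
      · intro hy
        exact ⟨Fin.cons t y, ⟨hy, by simp⟩, by simp⟩
      · rintro ⟨x, ⟨hx, h1, h2⟩, rfl⟩
        have : x 0 = t := le_antisymm h2 h1
        change Fin.cons t (Fin.tail x) ∈ C
        rw [← this, Fin.cons_self_tail]; exact hx
    have hcons : Continuous fun y : Fin k → ℝ => (Fin.cons t y : Fin (k + 1) → ℝ) := by
      refine continuous_pi fun i => ?_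
      refine Fin.cases ?_ (fun j => ?_) i
      · simpa using continuous_const
      · simpa using continuous_apply j
    have heq : φ '' L t t = (fun y => φ (Fin.cons t y)) '' C' := by
      ext p
      constructor
      · rintro ⟨x, ⟨hx, h1, h2⟩, rfl⟩
        have : x 0 = t := le_antisymm h2 h1
        have e : (Fin.cons t (Fin.tail x) : Fin (k + 1) → ℝ) = x := by
          rw [← this, Fin.cons_self_tail]
        exact ⟨Fin.tail x, by change Fin.cons t (Fin.tail x) ∈ C; rw [e]; exact hx,
          by simp only [e]⟩
      · rintro ⟨y, hy, rfl⟩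
        exact ⟨Fin.cons t y, ⟨hy, by simp⟩, rfl⟩
    rw [heq]
    apply ih
    · rw [hC'c]
      refine (hLc t t).image ?_
      exact continuous_pi fun i => continuous_apply _
    · intro y hy y' hy' a b ha hb hab
      have h := hconv hy hy' ha hb hab
      change Fin.cons t (a • y + b • y') ∈ C
      convert h using 1
      funext i
      refine Fin.cases ?_ (fun j => ?_) i
      · simp [← add_mul, hab]
      · simp
    · refine ⟨Fin.tail x, ?_⟩
      change Fin.cons t (Fin.tail x) ∈ C
      rw [← hxt, Fin.cons_self_tail]; exact hx
    · exact hφ.comp hcons.continuousOn fun y hy => hy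
    · intro y hy y' hy' h
      have := hinj hy hy' h
      exact Fin.cons_right_injective (α := fun _ => ℝ) t this
  intro m z hz hav
  have hloc : ∀ t, (∃ x ∈ C, x 0 = t) → ∃ ε > 0, Bounds m z (φ '' L (t - ε) (t + ε)) := by
    intro t ht
    have hb : Bounds m z (φ '' L t t) :=
      hslice t ht m z hz (hav.mono (Set.image_mono Set.inter_subset_left))
    have hsub : (⋂ j : ℕ, φ '' L (t - 1 / (j + 1)) (t + 1 / (j + 1))) ⊆ φ '' L t t := by
      intro p hp
      rw [Set.mem_iInter] at hp
      obtain ⟨x, hx, rfl⟩ := hp 0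
      have h1 : ∀ j : ℕ, |x 0 - t| ≤ 1 / ((j : ℝ) + 1) := by
        intro j
        obtain ⟨y, hy, hxy⟩ := hp j
        have := hinj hy.1 hx.1 hxy
        subst this
        rw [abs_le]
        constructor <;> linarith [hy.2.1, hy.2.2]
      have h2 : |x 0 - t| ≤ 0 :=
        ge_of_tendsto' tendsto_one_div_add_atTop_nhds_zero_nat h1
      have h3 : x 0 = t := by
        have := abs_nonpos_iff.1 h2; linarith
      exact ⟨x, ⟨hx.1, h3.ge, h3.le⟩, rfl⟩
    obtain ⟨j, hj⟩ := bounds_iInter (fun j => hDc _ _) (by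
      intro i j hij
      refine Set.image_mono (Set.inter_subset_inter_right _ ?_)
      rintro x ⟨h1, h2⟩
      have : 1 / ((j : ℝ) + 1) ≤ 1 / ((i : ℝ) + 1) := by gcongr
      constructor <;> linarith) (hb.mono hsub)
    exact ⟨1 / (j + 1), by positivity, hj⟩
  -- range of the first coordinate
  have hI : (fun x : Fin (k + 1) → ℝ => x 0) '' C =
      Set.Icc (sInf ((fun x : Fin (k + 1) → ℝ => x 0) '' C))
        (sSup ((fun x : Fin (k + 1) → ℝ => x 0) '' C)) :=
    eq_Icc_of_connected_compact
      ((hconv.isConnected hne).image _ hc0.continuousOn) (hC.image hc0)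
  set a := sInf ((fun x : Fin (k + 1) → ℝ => x 0) '' C)
  set b := sSup ((fun x : Fin (k + 1) → ℝ => x 0) '' C)
  have hab : a ≤ b := by
    obtain ⟨x, hx⟩ := hne
    have : x 0 ∈ Set.Icc a b := by rw [← hI]; exact ⟨x, hx, rfl⟩
    exact this.1.trans this.2
  have hmem : ∀ t : Set.Icc a b, ∃ x ∈ C, x 0 = (t : ℝ) := by
    intro t
    exact hI.ge t.2
  choose! ε hε hεb using hloc
  obtain ⟨t, ht0, hmono, ⟨N, hN⟩, ht⟩ := exists_monotone_Icc_subset_open_cover_Icc hab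
    (c := fun i : Set.Icc a b => Metric.ball i (ε i)) (fun i => Metric.isOpen_ball)
    (fun i _ => Set.mem_iUnion.2 ⟨i, Metric.mem_ball_self (hε _ (hmem i))⟩)
  have hpiece : ∀ j, Bounds m z (φ '' L (t j) (t (j + 1))) := by
    intro j
    obtain ⟨i, hi⟩ := ht j
    refine (hεb _ (hmem i)).mono (Set.image_mono (Set.inter_subset_inter_right _ ?_))
    rintro x ⟨h1, h2⟩
    have h3 := hi ⟨le_rfl, hmono (Nat.le_succ j)⟩
    have h4 := hi ⟨hmono (Nat.le_succ j), le_rfl⟩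
    rw [Metric.mem_ball, Subtype.dist_eq, Real.dist_eq, abs_lt] at h3 h4
    constructor <;> linarith
  have hall : ∀ j, Bounds m z (φ '' L a (t (j + 1))) := by
    intro j
    induction j with
    | zero => simpa [ht0] using hpiece 0
    | succ j ihj =>
      have h1 : φ '' L a (t (j + 1 + 1)) = φ '' L a (t (j + 1)) ∪
          φ '' L (t (j + 1)) (t (j + 1 + 1)) := by
        rw [← Set.image_union]
        congr 1
        ext x
        have h2 : (t (j + 1) : ℝ) ≤ t (j + 1 + 1) := hmono (Nat.le_succ _)
        have h3 : a ≤ t (j + 1) := (t (j + 1)).2.1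
        simp only [L, Set.mem_inter_iff, Set.mem_union, Set.mem_ofPred_eq]
        constructor
        · rintro ⟨hx, h4, h5⟩
          rcases le_total (x 0) (t (j + 1)) with h | h
          · exact Or.inl ⟨hx, h4, h⟩
          · exact Or.inr ⟨hx, h, h5⟩
        · rintro (⟨hx, h4, h5⟩ | ⟨hx, h4, h5⟩)
          · exact ⟨hx, h4, h5.trans h2⟩
          · exact ⟨hx, h3.trans h4, h5⟩
      rw [h1]
      refine glue' (hDc _ _) (hDc _ _) ?_ ihj (hpiece (j + 1))
      have h2 : φ '' L a (t (j + 1)) ∩ φ '' L (t (j + 1)) (t (j + 1 + 1)) =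
          φ '' L (t (j + 1)) (t (j + 1)) := by
        rw [← hinj.image_inter Set.inter_subset_left Set.inter_subset_left]
        congr 1
        ext x
        have h2 : (t (j + 1) : ℝ) ≤ t (j + 1 + 1) := hmono (Nat.le_succ _)
        have h3 : a ≤ t (j + 1) := (t (j + 1)).2.1
        simp only [L, Set.mem_inter_iff, Set.mem_ofPred_eq]
        constructor
        · rintro ⟨⟨hx, h4, h5⟩, ⟨_, h6, h7⟩⟩
          exact ⟨hx, h6, h5⟩
        · rintro ⟨hx, h4, h5⟩
          exact ⟨⟨hx, h3.trans h4, h5⟩, hx, h4, h5.trans h2⟩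
      rw [h2]
      exact hslice _ (hmem _)
  refine (hall N).mono (Set.image_mono fun x hx => ⟨hx, ?_⟩)
  have : x 0 ∈ Set.Icc a b := by rw [← hI]; exact ⟨x, hx, rfl⟩
  rw [hN (N + 1) (by omega)]
  exact this

theorem acyclic_convex (k : ℕ) (C : Set (Fin k → ℝ)) (φ : (Fin k → ℝ) → (Fin n → ℝ))
    (hC : IsCompact C) (hconv : Convex ℝ C) (hne : C.Nonempty) (hφ : ContinuousOn φ C)
    (hinj : Set.InjOn φ C) : Acyclic (φ '' C) := by
  induction k with
  | zero =>
    obtain ⟨x, hx⟩ := hne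
    have : C = {x} := Set.eq_singleton_iff_unique_mem.2 ⟨hx, fun y _ => Subsingleton.elim _ _⟩
    rw [this, Set.image_singleton]
    exact acyclic_singleton _
  | succ k ih => exact acyclic_succ ih C φ hC hconv hne hφ hinj

/-- the Euclidean unit sphere -/
def Sph (k : ℕ) : Set (Fin k → ℝ) := {x | ∑ i, x i ^ 2 = 1}

/-- the Euclidean unit ball -/
def Bal (k : ℕ) : Set (Fin k → ℝ) := {x | ∑ i, x i ^ 2 ≤ 1}

lemma isCompact_Bal (k : ℕ) : IsCompact (Bal k) := by
  refine Metric.isCompact_of_isClosed_isBounded (isClosed_le (by fun_prop) continuous_const) ?_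
  refine Metric.isBounded_closedBall.subset (?_ : Bal k ⊆ Metric.closedBall 0 1)
  intro x hx
  rw [mem_closedBall_zero_iff]
  refine (pi_norm_le_iff_of_nonneg zero_le_one).2 fun i => ?_
  have h1 : x i ^ 2 ≤ 1 :=
    (Finset.single_le_sum (f := fun i => x i ^ 2) (fun j _ => sq_nonneg _)
      (Finset.mem_univ i)).trans hx
  rw [Real.norm_eq_abs]
  exact (sq_le_one_iff_abs_le_one _).1 h1

lemma isCompact_Sph (k : ℕ) : IsCompact (Sph k) :=
  (isCompact_Bal k).of_isClosed_subset (isClosed_eq (by fun_prop) continuous_const)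
    fun _ hx => le_of_eq hx

lemma convex_Bal (k : ℕ) : Convex ℝ (Bal k) := by
  intro x hx y hy a b ha hb hab
  have h1 : ∀ i, (a • x + b • y) i ^ 2 ≤ a * x i ^ 2 + b * y i ^ 2 := by
    intro i
    simp only [Pi.add_apply, Pi.smul_apply, smul_eq_mul]
    have hb' : b = 1 - a := by linarith
    subst hb'
    nlinarith [mul_nonneg (mul_nonneg ha hb) (sq_nonneg (x i - y i))]
  calc ∑ i, (a • x + b • y) i ^ 2 ≤ ∑ i, (a * x i ^ 2 + b * y i ^ 2) :=
        Finset.sum_le_sum fun i _ => h1 i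
    _ = a * ∑ i, x i ^ 2 + b * ∑ i, y i ^ 2 := by
        rw [Finset.sum_add_distrib, Finset.mul_sum, Finset.mul_sum]
    _ ≤ a * 1 + b * 1 := by
        have h2 : ∑ i, x i ^ 2 ≤ 1 := hx
        have h3 : ∑ i, y i ^ 2 ≤ 1 := hy
        gcongr
    _ = 1 := by linarith

lemma acyclic_hemi {k : ℕ} (s : ℝ) (hs : s = 1 ∨ s = -1) (φ : (Fin (k + 1) → ℝ) → (Fin n → ℝ))
    (hφ : ContinuousOn φ (Sph (k + 1))) (hinj : Set.InjOn φ (Sph (k + 1))) :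
    Acyclic (φ '' (Sph (k + 1) ∩ {x | 0 ≤ s * x 0})) := by
  have hss : s * s = 1 := by rcases hs with rfl | rfl <;> norm_num
  let G : (Fin k → ℝ) → (Fin (k + 1) → ℝ) := fun y => Fin.cons (s * √(1 - ∑ i, y i ^ 2)) y
  have hG : Continuous G := by
    refine continuous_pi fun i => ?_
    refine Fin.cases ?_ (fun j => ?_) i
    · simp only [G, Fin.cons_zero]; fun_prop
    · simpa [G] using continuous_apply j
  have hGinj : Function.Injective G := fun y y' h => (Fin.cons_inj.1 h).2
  have himg : Sph (k + 1) ∩ {x | 0 ≤ s * x 0} = G '' Bal k := by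
    ext x
    constructor
    · rintro ⟨h1, h2⟩
      have h1' : ∑ i, x i ^ 2 = 1 := h1
      have h2' : 0 ≤ s * x 0 := h2
      rw [Fin.sum_univ_succ] at h1'
      refine ⟨Fin.tail x, ?_, ?_⟩
      · change ∑ i, Fin.tail x i ^ 2 ≤ 1
        simp only [Fin.tail]
        nlinarith [sq_nonneg (x 0)]
      · simp only [G, Fin.tail]
        rw [show 1 - ∑ i : Fin k, x i.succ ^ 2 = (s * x 0) ^ 2 by
          rw [mul_pow, sq s, hss]; linarith, Real.sqrt_sq h2', ← mul_assoc, hss, one_mul]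
        exact Fin.cons_self_tail x
    · rintro ⟨y, hy, rfl⟩
      have hy' : ∑ i, y i ^ 2 ≤ 1 := hy
      constructor
      · change ∑ i, G y i ^ 2 = 1
        rw [Fin.sum_univ_succ]
        simp only [G, Fin.cons_zero, Fin.cons_succ]
        rw [mul_pow, sq s, hss, Real.sq_sqrt (by linarith)]
        ring
      · change 0 ≤ s * G y 0
        simp only [G, Fin.cons_zero]
        rw [← mul_assoc, hss, one_mul]
        positivity
  have hmaps : Set.MapsTo G (Bal k) (Sph (k + 1)) := by
    intro y hy
    have : G y ∈ Sph (k + 1) ∩ {x | 0 ≤ s * x 0} := by rw [himg]; exact ⟨y, hy, rfl⟩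
    exact this.1
  rw [himg, ← Set.image_comp]
  exact acyclic_convex k (Bal k) (φ ∘ G) (isCompact_Bal k) (convex_Bal k) ⟨0, by simp [Bal]⟩
    (hφ.comp hG.continuousOn hmaps) (hinj.comp hGinj.injOn hmaps)

theorem spherical_sphere (k d : ℕ) (hd : d + k = n) (φ : (Fin k → ℝ) → (Fin n → ℝ))
    (hφ : ContinuousOn φ (Sph k)) (hinj : Set.InjOn φ (Sph k)) : Spherical (φ '' Sph k) d := by
  induction k generalizing d with
  | zero =>
    have : Sph 0 = ∅ := by
      ext x; simp [Sph]
    rw [this, Set.image_empty]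
    have : d = n := by omega
    rw [this]; exact spherical_empty
  | succ k ih =>
    have hc0 : Continuous fun x : Fin (k + 1) → ℝ => x 0 := continuous_apply 0
    let A := Sph (k + 1) ∩ {x | 0 ≤ (1 : ℝ) * x 0}
    let B := Sph (k + 1) ∩ {x | 0 ≤ (-1 : ℝ) * x 0}
    have hA : IsCompact (φ '' A) :=
      ((isCompact_Sph _).inter_right (isClosed_le continuous_const
        (by fun_prop))).image_of_continuousOn (hφ.mono Set.inter_subset_left)
    have hB : IsCompact (φ '' B) :=
      ((isCompact_Sph _).inter_right (isClosed_le continuous_const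
        (by fun_prop))).image_of_continuousOn (hφ.mono Set.inter_subset_left)
    have hAB : Sph (k + 1) = A ∪ B := by
      ext x
      simp only [A, B, Set.mem_union, Set.mem_inter_iff, Set.mem_ofPred_eq, ← and_or_left,
        iff_self_and]
      intro _
      rcases le_total 0 (x 0) with h | h
      · left; linarith
      · right; linarith
    let G : (Fin k → ℝ) → (Fin (k + 1) → ℝ) := fun y => Fin.cons 0 y
    have hG : Continuous G := by
      refine continuous_pi fun i => ?_
      refine Fin.cases ?_ (fun j => ?_) i
      · simpa [G] using continuous_const
      · simpa [G] using continuous_apply j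
    have hGinj : Function.Injective G := fun y y' h => (Fin.cons_inj.1 h).2
    have hmaps : Set.MapsTo G (Sph k) (Sph (k + 1)) := by
      intro y hy
      have hy' : ∑ i, y i ^ 2 = 1 := hy
      change ∑ i, G y i ^ 2 = 1
      rw [Fin.sum_univ_succ]
      simp [G, hy']
    have hAB_inter : A ∩ B = G '' Sph k := by
      ext x
      constructor
      · rintro ⟨⟨h1, h2⟩, ⟨_, h3⟩⟩
        have h2' : 0 ≤ (1 : ℝ) * x 0 := h2
        have h3' : 0 ≤ (-1 : ℝ) * x 0 := h3
        have h0 : x 0 = 0 := by linarith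
        have h1' : ∑ i, x i ^ 2 = 1 := h1
        rw [Fin.sum_univ_succ, h0] at h1'
        refine ⟨Fin.tail x, ?_, ?_⟩
        · change ∑ i, Fin.tail x i ^ 2 = 1
          simpa [Fin.tail] using h1'
        · simp only [G]
          rw [← h0]; exact Fin.cons_self_tail x
      · rintro ⟨y, hy, rfl⟩
        have := hmaps hy
        exact ⟨⟨this, by simp [G]⟩, this, by simp [G]⟩
    rw [hAB, Set.image_union]
    apply spherical_union hA hB (acyclic_hemi 1 (Or.inl rfl) φ hφ hinj)
      (acyclic_hemi (-1) (Or.inr rfl) φ hφ hinj)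
    rw [← hinj.image_inter Set.inter_subset_left Set.inter_subset_left, hAB_inter, ← Set.image_comp]
    exact ih (d + 1) (by omega) (φ ∘ G) (hφ.comp hG.continuousOn hmaps)
      (hinj.comp hGinj.injOn hmaps)

end JB

namespace JB
variable {n : ℕ}

/-- a vertex as a chain -/
def pt (v : Fin n → ℤ) : Chain n := fun w => if w = (fun i => 2 * v i) then 1 else 0

/-- the position of a vertex -/
noncomputable def pos (m : ℕ) (v : Fin n → ℤ) : Fin n → ℝ := fun i => v i / 2 ^ m

lemma mem_cell_vertex {m : ℕ} {v : Fin n → ℤ} {x : Fin n → ℝ} :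
    x ∈ cell m (fun i => 2 * v i) ↔ x = pos m v := by
  have h1 : ∀ i, 2 * v i / 2 = v i := fun i => by omega
  have h2 : ∀ i, (2 * v i + 1) / 2 = v i := fun i => by omega
  have hp : (0 : ℝ) < 2 ^ m := by positivity
  constructor
  · intro h
    funext i
    obtain ⟨h3, h4⟩ := h i
    simp only [h1, h2] at h3 h4
    rw [pos, eq_div_iff hp.ne']
    linarith
  · rintro rfl i
    simp only [h1, h2, pos]
    rw [mul_div_cancel₀ _ hp.ne']
    exact ⟨le_rfl, le_rfl⟩

lemma cell_nonempty (m : ℕ) (w : Fin n → ℤ) : (cell m w).Nonempty := by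
  refine ⟨fun i => (w i / 2 : ℤ) / 2 ^ m, fun i => ?_⟩
  have hp : (0 : ℝ) < 2 ^ m := by positivity
  simp only
  rw [mul_div_cancel₀ _ hp.ne']
  exact ⟨le_rfl, by exact_mod_cast (by omega : w i / 2 ≤ (w i + 1) / 2)⟩

lemma convex_cell (m : ℕ) (w : Fin n → ℤ) : Convex ℝ (cell m w) := by
  intro x hx y hy a b ha hb hab i
  obtain ⟨h1, h2⟩ := hx i
  obtain ⟨h3, h4⟩ := hy i
  have hb' : b = 1 - a := by linarith
  subst hb'
  simp only [Pi.add_apply, Pi.smul_apply, smul_eq_mul]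
  constructor <;> nlinarith

lemma pt_ne_zero {v w : Fin n → ℤ} (h : pt v w ≠ 0) : w = fun i => 2 * v i := by
  by_contra h'
  exact h (by simp [pt, h'])

lemma hom_pt (v : Fin n → ℤ) : Hom 0 (pt v) := by
  intro w hw
  rw [pt_ne_zero hw]
  simp [dim]

lemma bd_hom_zero {c : Chain n} (h : Hom 0 c) : bd c = 0 := by
  funext w
  by_contra hw
  obtain ⟨i, z, he, hz, hc⟩ := bd_ne_zero hw
  have := h _ hc
  rw [dim_update he (by grind)] at this
  omega

lemma sd_pt (v : Fin n → ℤ) : sd (pt v) = pt (fun i => 2 * v i) := by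
  funext w
  simp only [sd, pt, ← ite_and]
  congr 1
  apply propext
  rw [funext_iff, funext_iff, ← forall_and]
  refine forall_congr' fun i => ?_
  simp only [par]
  grind

lemma sdk_pt (k : ℕ) (v : Fin n → ℤ) : sd^[k] (pt v) = pt (fun i => 2 ^ k * v i) := by
  induction k with
  | zero => simp
  | succ k ih =>
    rw [Function.iterate_succ_apply', ih, sd_pt]
    congr 1
    funext i; ring

lemma pos_sdk (m k : ℕ) (v : Fin n → ℤ) : pos (m + k) (fun i => 2 ^ k * v i) = pos m v := by
  funext i
  simp only [pos]
  push_cast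
  rw [pow_add, mul_comm ((2 : ℝ) ^ m), mul_div_mul_left _ _ (by positivity)]

lemma avoid_pt {m : ℕ} {v : Fin n → ℤ} {S : Set (Fin n → ℝ)} (h : pos m v ∉ S) :
    Avoid m (pt v) S := by
  intro w hw
  rw [pt_ne_zero hw, Set.disjoint_left]
  intro x hx hxS
  rw [mem_cell_vertex] at hx
  exact h (hx ▸ hxS)

lemma dense_pos {O : Set (Fin n → ℝ)} (hO : IsOpen O) {x : Fin n → ℝ} (hx : x ∈ O) :
    ∃ M, ∀ m, M ≤ m → ∃ v, pos m v ∈ O := by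
  obtain ⟨r, hr, hr'⟩ := Metric.isOpen_iff.1 hO x hx
  obtain ⟨M, hM⟩ := exists_pow_lt_of_lt_one hr (by norm_num : (1 / 2 : ℝ) < 1)
  refine ⟨M, fun m hm => ⟨fun i => ⌊2 ^ m * x i⌋, hr' ?_⟩⟩
  have h1 : (1 / 2 : ℝ) ^ m ≤ (1 / 2) ^ M :=
    pow_le_pow_of_le_one (by norm_num) (by norm_num) hm
  refine lt_of_le_of_lt ((dist_pi_le_iff (by positivity)).2 fun i => ?_) (h1.trans_lt hM)
  have hp : (0 : ℝ) < 2 ^ m := by positivity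
  have h2 := Int.floor_le (2 ^ m * x i)
  have h3 := Int.lt_floor_add_one (2 ^ m * x i)
  rw [one_div_pow, Real.dist_eq, le_div_iff₀ hp, ← abs_of_pos hp, ← abs_mul, abs_le, abs_of_pos hp]
  simp only [pos]
  rw [sub_mul, div_mul_cancel₀ _ hp.ne']
  constructor <;> nlinarith

/-- augmentation of a boundary of a finite chain vanishes -/
lemma finsum_bd {b : Chain n} (hb : (Function.support b).Finite) :
    ∑ᶠ v : Fin n → ℤ, bd b (fun i => 2 * v i) = 0 := by
  have hfin : ∀ i (z : ℤ), (Function.support fun v : Fin n → ℤ =>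
      b (Function.update (fun i => 2 * v i) i (2 * v i + z))).Finite := by
    intro i z
    refine Set.Finite.preimage (f := fun v : Fin n → ℤ =>
      Function.update (fun i => 2 * v i) i (2 * v i + z)) ?_ hb
    intro v _ v' _ h
    funext j
    have := congrFun h j
    by_cases hj : j = i
    · subst hj; simpa using this
    · simpa [hj] using this
  have h1 : ∀ v : Fin n → ℤ, bd b (fun i => 2 * v i) =
      ∑ i, (b (Function.update (fun i => 2 * v i) i (2 * v i + 1)) +
        b (Function.update (fun i => 2 * v i) i (2 * v i + (-1)))) := by
    intro v
    simp only [bd, bdi]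
    refine Finset.sum_congr rfl fun i _ => ?_
    rw [if_pos (by simp), sub_eq_add_neg]
  simp only [h1]
  rw [finsum_sum_comm]
  · refine Finset.sum_eq_zero fun i _ => ?_
    rw [finsum_add_distrib (hfin i 1) (hfin i (-1))]
    rw [← finsum_comp_equiv (Equiv.addRight (Pi.single i (1 : ℤ)))
      (f := fun v : Fin n → ℤ => b (Function.update (fun i => 2 * v i) i (2 * v i + (-1))))]
    have h2 : ∀ v : Fin n → ℤ, Function.update (fun j => 2 * (Equiv.addRight (Pi.single i (1 : ℤ))) v j) i
        (2 * (Equiv.addRight (Pi.single i (1 : ℤ))) v i + (-1)) =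
        Function.update (fun i => 2 * v i) i (2 * v i + 1) := by
      intro v
      funext j
      by_cases hj : j = i
      · subst hj; simp; ring
      · simp [hj]
    simp only [h2]
    exact CharTwo.add_self_eq_zero _
  · intro i _
    refine ((hfin i 1).union (hfin i (-1))).subset ?_
    exact Function.support_add _ _

/-- `U` is a union of components of the complement of `S` -/
def Clopen (U S : Set (Fin n → ℝ)) : Prop :=
  IsOpen U ∧ ∃ W, IsOpen W ∧ Disjoint U W ∧ Sᶜ ⊆ U ∪ W

lemma Clopen.cell {U S : Set (Fin n → ℝ)} (h : Clopen U S) {m : ℕ} {w : Fin n → ℤ}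
    (hd : Disjoint (cell m w) S) (hne : (cell m w ∩ U).Nonempty) : cell m w ⊆ U := by
  obtain ⟨hU, W, hW, hUW, hS⟩ := h
  exact (convex_cell m w).isPreconnected.subset_left_of_subset_union hU hW hUW
    ((Set.subset_compl_iff_disjoint_right.2 hd).trans hS) hne

open Classical in
lemma no_bound {U S : Set (Fin n → ℝ)} (h : Clopen U S) (hbd : Bornology.IsBounded U) {M : ℕ}
    {b : Chain n} (hb : Avoid M b S) {v : Fin n → ℤ} (hv : pos M v ∈ U)
    (hbv : ∀ w, cell M w ⊆ U → bd b w = pt v w) : False := by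
  let b' : Chain n := fun w => if cell M w ⊆ U then b w else 0
  have hfin : (Function.support b').Finite := by
    refine (finite_cells M hbd).subset ?_
    intro w hw
    have hw' : b' w ≠ 0 := hw
    simp only [b'] at hw'
    split_ifs at hw' with hc
    · obtain ⟨x, hx⟩ := cell_nonempty M w
      exact Set.not_disjoint_iff.2 ⟨x, hx, hc hx⟩
    · exact absurd rfl hw'
  have h1 : ∀ u : Fin n → ℤ, bd b' (fun i => 2 * u i) = if u = v then 1 else 0 := by
    intro u
    by_cases hc : cell M (fun i => 2 * u i) ⊆ U
    · have h2 : bd b' (fun i => 2 * u i) = bd b (fun i => 2 * u i) := by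
        have key : ∀ i z, (z = 2 * u i + 1 ∨ z = 2 * u i - 1) →
            b' (Function.update (fun i => 2 * u i) i z) =
              b (Function.update (fun i => 2 * u i) i z) := by
          intro i z hz
          simp only [b']
          split_ifs with h3
          · rfl
          · by_contra h4
            apply h3
            refine h.cell (hb _ (Ne.symm h4)) ?_
            obtain ⟨x, hx⟩ := cell_nonempty M (fun i => 2 * u i)
            exact ⟨x, cell_face (by simp) hz hx, hc hx⟩
        simp only [bd, bdi]
        refine Finset.sum_congr rfl fun i _ => ?_
        rw [key i _ (Or.inl rfl), key i _ (Or.inr rfl)]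
      rw [h2, hbv _ hc]
      simp only [pt]
      congr 1
      apply propext
      constructor
      · intro h; funext i; have := congrFun h i; simpa using this
      · rintro rfl; rfl
    · have h2 : u ≠ v := by
        rintro rfl
        apply hc
        intro x hx
        rw [mem_cell_vertex] at hx
        exact hx ▸ hv
      rw [if_neg h2]
      by_contra h3
      obtain ⟨i, z, he, hz, h4⟩ := bd_ne_zero h3
      simp only [b'] at h4
      split_ifs at h4 with h5
      · exact hc ((cell_face he hz).trans h5)
      · exact absurd rfl h4
  have h2 := finsum_bd hfin
  simp only [h1] at h2
  rw [finsum_eq_single _ v (fun u hu => if_neg hu), if_pos rfl] at h2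
  exact one_ne_zero h2

lemma pt_zero_of_not_subset {M : ℕ} {v w : Fin n → ℤ} {U : Set (Fin n → ℝ)}
    (hv : pos M v ∉ U) (hw : cell M w ⊆ U) : pt v w = 0 := by
  by_contra h
  rw [pt_ne_zero h] at hw
  exact hv (hw (mem_cell_vertex.2 rfl))

lemma not_bounds_pt {U S : Set (Fin n → ℝ)} (h : Clopen U S) (hbd : Bornology.IsBounded U) {m : ℕ}
    {v : Fin n → ℤ} (hv : pos m v ∈ U) : ¬ Bounds m (pt v) S := by
  rintro ⟨k, b, hb, hbb⟩
  rw [sdk_pt] at hbb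
  exact no_bound h hbd hb (v := fun i => 2 ^ k * v i) (by rwa [pos_sdk]) fun w _ => by rw [hbb]

lemma not_bounds_pt_add {U S : Set (Fin n → ℝ)} (h : Clopen U S) (hbd : Bornology.IsBounded U)
    {m : ℕ} {v v' : Fin n → ℤ} (hv : pos m v ∈ U) (hv' : pos m v' ∉ U) :
    ¬ Bounds m (pt v + pt v') S := by
  rintro ⟨k, b, hb, hbb⟩
  rw [sdk_add, sdk_pt, sdk_pt] at hbb
  refine no_bound h hbd hb (v := fun i => 2 ^ k * v i) (by rwa [pos_sdk]) fun w hw => ?_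
  rw [hbb, Pi.add_apply, pt_zero_of_not_subset (v := fun i => 2 ^ k * v' i) (by rwa [pos_sdk]) hw,
    add_zero]

lemma Acyclic.no_bounded {U S : Set (Fin n → ℝ)} (hS : Acyclic S) (h : Clopen U S)
    (hUS : U ⊆ Sᶜ) (hbd : Bornology.IsBounded U) : U = ∅ := by
  by_contra hne
  obtain ⟨x, hx⟩ := Set.nonempty_iff_ne_empty.2 hne
  obtain ⟨M, hM⟩ := dense_pos h.1 hx
  obtain ⟨v, hv⟩ := hM M le_rfl
  exact not_bounds_pt h hbd hv (hS M _ (bd_hom_zero (hom_pt v)) (avoid_pt (hUS hv)))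

lemma Spherical.no_two {U U' S : Set (Fin n → ℝ)} {d : ℕ} (hS : Spherical S d) (h : Clopen U S)
    (h' : Clopen U' S) (hUS : U ⊆ Sᶜ) (hUS' : U' ⊆ Sᶜ) (hbd : Bornology.IsBounded U)
    (hbd' : Bornology.IsBounded U') (hd : Disjoint U U') (hne : U.Nonempty) (hne' : U'.Nonempty) :
    False := by
  obtain ⟨m, g, -, -, -, -, hgen⟩ := hS
  obtain ⟨x, hx⟩ := hne
  obtain ⟨y, hy⟩ := hne'
  obtain ⟨M, hM⟩ := dense_pos h.1 hx
  obtain ⟨M', hM'⟩ := dense_pos h'.1 hy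
  obtain ⟨v, hv⟩ := hM (m + (M + M')) (by omega)
  obtain ⟨v', hv'⟩ := hM' (m + (M + M')) (by omega)
  have h1 := hgen (M + M') _ (bd_hom_zero (hom_pt v)) (avoid_pt (hUS hv))
  have h2 := hgen (M + M') _ (bd_hom_zero (hom_pt v')) (avoid_pt (hUS' hv'))
  have h3 := h1.resolve_left (not_bounds_pt h hbd hv)
  have h4 := h2.resolve_left (not_bounds_pt h' hbd' hv')
  have h5 := h3.add h4
  rw [add_add_add_comm, add_self, add_zero] at h5
  exact not_bounds_pt_add h hbd hv (fun hh => Set.disjoint_left.1 hd hh hv') h5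

lemma push_pt {i : Fin n} {u : ℤ} {v w : Fin n → ℤ} :
    push i u (pt v) w = if ¬ Even (w i) ∧ (∀ k, k ≠ i → w k = 2 * v k) ∧ 2 * v i ∈ btw u (w i)
      then 1 else 0 := by
  classical
  simp only [push]
  by_cases he : Even (w i)
  · simp [he]
  · have h1 : ∀ j, pt v (Function.update w i j) =
        if j = 2 * v i then (if ∀ k, k ≠ i → w k = 2 * v k then 1 else 0) else 0 := by
      intro j
      simp only [pt, ← ite_and]
      congr 1
      apply propext
      constructor
      · intro h
        refine ⟨by simpa using congrFun h i, fun k hk => by simpa [hk] using congrFun h k⟩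
      · rintro ⟨h1, h2⟩
        funext k
        by_cases hk : k = i
        · subst hk; simpa using h1
        · simpa [hk] using h2 k hk
    simp only [h1, if_neg he, Finset.sum_ite_eq']
    split_ifs <;> tauto

lemma bd_push_hom_zero {i : Fin n} {u : ℤ} (hu : ¬ Even u) {c : Chain n} (hc : Hom 0 c) :
    bd (push i u c) = c := by
  rw [bd_push_cycle i hu (bd_hom_zero hc)]
  have : proj i u c = 0 := by
    funext w
    simp only [proj, Pi.zero_apply]
    split_ifs with he
    · rfl
    · by_contra h
      have h1 := hc _ h
      simp only [dim, Finset.card_eq_zero, Finset.filter_eq_empty_iff] at h1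
      have := h1 (Finset.mem_univ i)
      simp only [Function.update_self, not_not] at this
      exact hu this
  rw [this, add_zero]

lemma mem_btw {u z j : ℤ} (h : u < 2 * j) : 2 * j ∈ btw u z ↔ 2 * j < z := by
  simp only [btw, Finset.mem_filter, Finset.mem_union, Finset.mem_Ioo]
  grind

lemma segment {m : ℕ} {x : Fin n → ℝ} {r : ℝ} {S : Set (Fin n → ℝ)}
    (hd : Disjoint (Metric.ball x r) S) {v : Fin n → ℤ} {i : Fin n} {t : ℤ}
    (hv : pos m v ∈ Metric.ball x r) (hv' : pos m (Function.update v i t) ∈ Metric.ball x r) :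
    Bounds m (pt v + pt (Function.update v i t)) S := by
  let u : ℤ := 2 * min (v i) t - 1
  have hu : ¬ Even u := by simp only [u]; grind
  have hh : Hom 0 (pt v + pt (Function.update v i t)) := by
    intro w hw
    by_cases h : pt v w = 0
    · rw [Pi.add_apply, h, zero_add] at hw; exact hom_pt _ w hw
    · exact hom_pt _ w h
  rw [← bd_push_hom_zero (i := i) hu hh]
  apply bounds_bd
  intro w hw
  refine hd.mono_left ?_
  rw [push_add, Pi.add_apply, push_pt, push_pt] at hw
  simp only [Function.update_self, mem_btw (show u < 2 * v i by simp only [u]; omega),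
    mem_btw (show u < 2 * t by simp only [u]; omega)] at hw
  have e : (∀ k, k ≠ i → w k = 2 * Function.update v i t k) ↔ ∀ k, k ≠ i → w k = 2 * v k := by
    refine forall_congr' fun k => forall_congr' fun hk => ?_
    rw [Function.update_of_ne hk]
  simp only [e] at hw
  have key : ¬ Even (w i) ∧ (∀ k, k ≠ i → w k = 2 * v k) ∧
      ((2 * v i < w i ∧ w i < 2 * t) ∨ (2 * t < w i ∧ w i < 2 * v i)) := by
    by_cases h1 : ¬ Even (w i)
    · by_cases h2 : ∀ k, k ≠ i → w k = 2 * v k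
      · refine ⟨h1, h2, ?_⟩
        by_cases h3 : 2 * v i < w i <;> by_cases h4 : 2 * t < w i
        · exfalso; apply hw
          rw [if_pos ⟨h1, h2, h3⟩, if_pos ⟨h1, h2, h4⟩]; exact CharTwo.add_self_eq_zero _
        · left; grind
        · right; grind
        · exfalso; apply hw
          rw [if_neg (by tauto), if_neg (by tauto), add_zero]
      · exfalso; apply hw; rw [if_neg (by tauto), if_neg (by tauto), add_zero]
    · exfalso; apply hw; rw [if_neg (by tauto), if_neg (by tauto), add_zero]
  obtain ⟨h1, h2, h3⟩ := key
  have hp : (0 : ℝ) < 2 ^ m := by positivity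
  have hr : 0 < r := lt_of_le_of_lt dist_nonneg hv
  intro y hy
  rw [Metric.mem_ball, dist_pi_lt_iff hr] at hv hv' ⊢
  intro k
  by_cases hk : k = i
  · subst hk
    have h4 := hv k
    have h5 := hv' k
    obtain ⟨h6, h7⟩ := hy k
    simp only [pos, Function.update_self] at h4 h5
    rw [Real.dist_eq, abs_lt] at h4 h5 ⊢
    have lo : ∀ s : ℤ, 2 * s < w k → (s : ℝ) / 2 ^ m ≤ y k := by
      intro s hs
      rw [div_le_iff₀ hp]
      have : (s : ℝ) ≤ ((w k / 2 : ℤ) : ℝ) := by exact_mod_cast (by omega : s ≤ w k / 2)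
      linarith
    have hi : ∀ s : ℤ, w k < 2 * s → y k ≤ (s : ℝ) / 2 ^ m := by
      intro s hs
      rw [le_div_iff₀ hp]
      have : (((w k + 1) / 2 : ℤ) : ℝ) ≤ s := by exact_mod_cast (by omega : (w k + 1) / 2 ≤ s)
      linarith
    rcases h3 with ⟨h8, h9⟩ | ⟨h8, h9⟩
    · have := lo _ h8; have := hi _ h9
      constructor <;> linarith
    · have := lo _ h8; have := hi _ h9
      constructor <;> linarith
  · have h4 := hv k
    obtain ⟨h6, h7⟩ := hy k
    rw [h2 k hk] at h6 h7
    have h8 : y k = pos m v k := by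
      rw [show 2 * v k / 2 = v k by omega] at h6
      rw [show (2 * v k + 1) / 2 = v k by omega] at h7
      simp only [pos]
      rw [eq_div_iff hp.ne']; linarith
    rw [h8]; exact h4

lemma bounds_ball {m : ℕ} {x : Fin n → ℝ} {r : ℝ} {S : Set (Fin n → ℝ)}
    (hd : Disjoint (Metric.ball x r) S) {v v' : Fin n → ℤ}
    (hv : pos m v ∈ Metric.ball x r) (hv' : pos m v' ∈ Metric.ball x r) :
    Bounds m (pt v + pt v') S := by
  classical
  have hr : 0 < r := lt_of_le_of_lt dist_nonneg hv
  have hin : ∀ s : Finset (Fin n), pos m (fun i => if i ∈ s then v' i else v i) ∈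
      Metric.ball x r := by
    intro s
    rw [Metric.mem_ball, dist_pi_lt_iff hr] at hv hv' ⊢
    intro i
    by_cases h : i ∈ s
    · simpa [pos, h] using hv' i
    · simpa [pos, h] using hv i
  have key : ∀ s : Finset (Fin n),
      Bounds m (pt v + pt (fun i => if i ∈ s then v' i else v i)) S := by
    intro s
    induction s using Finset.induction_on with
    | empty =>
      simp only [Finset.notMem_empty, if_false, add_self]
      exact ⟨0, 0, fun w hw => absurd rfl hw, bd_zero⟩
    | insert a s ha ih =>
      have e : (fun i => if i ∈ insert a s then v' i else v i) =
          Function.update (fun i => if i ∈ s then v' i else v i) a (v' a) := by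
        funext j
        by_cases hj : j = a
        · subst hj; simp
        · simp [hj]
      have h1 := segment (i := a) (t := v' a) hd (hin s) (by rw [← e]; exact hin _)
      rw [← e] at h1
      have h2 := ih.add h1
      rwa [add_assoc, ← add_assoc (pt fun i => if i ∈ s then v' i else v i), add_self,
        zero_add] at h2
  simpa using key Finset.univ

lemma bounds_far {m : ℕ} {S : Set (Fin n → ℝ)} {R : ℝ} {i : Fin n} (hS : ∀ x ∈ S, x i < R)
    {v : Fin n → ℤ} (hv : R < pos m v i) : Bounds m (pt v) S := by
  have hu : ¬ Even (2 * v i - 1) := by grind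
  rw [← bd_push_hom_zero (i := i) hu (hom_pt v)]
  apply bounds_bd
  intro w hw
  rw [push_pt] at hw
  simp only [mem_btw (show 2 * v i - 1 < 2 * v i by omega)] at hw
  split_ifs at hw with h
  · rw [Set.disjoint_left]
    intro x hx hxS
    have h1 := hS x hxS
    have h2 := (hx i).1
    have h3 : (v i : ℝ) ≤ ((w i / 2 : ℤ) : ℝ) := by exact_mod_cast (by omega : v i ≤ w i / 2)
    simp only [pos] at hv
    rw [lt_div_iff₀ (by positivity)] at hv
    have hp : (0 : ℝ) < 2 ^ m := by positivity
    nlinarith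
  · exact absurd rfl hw

lemma bounds_pt_of_connected (hn : 0 < n) {S : Set (Fin n → ℝ)} (hS : IsCompact S)
    (hconn : IsPreconnected Sᶜ) {m : ℕ} {v : Fin n → ℤ} (hv : pos m v ∉ S) :
    Bounds m (pt v) S := by
  by_contra hnb
  let i0 : Fin n := ⟨0, hn⟩
  obtain ⟨R, hR⟩ : ∃ R, ∀ x ∈ S, x i0 < R := by
    obtain ⟨R, hR⟩ := hS.isBounded.subset_closedBall 0
    refine ⟨R + 1, fun x hx => ?_⟩
    have := hR hx
    rw [mem_closedBall_zero_iff] at this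
    have h2 := (le_abs_self _).trans ((norm_le_pi_norm x i0).trans this)
    linarith
  let G : Set (Fin n → ℝ) := {x | ∃ ε > 0, ∀ m v, dist (pos m v) x < ε → Bounds m (pt v) S}
  have hG : IsOpen G := by
    rw [Metric.isOpen_iff]
    rintro x ⟨ε, hε, h⟩
    refine ⟨ε / 2, by positivity, fun y hy => ⟨ε / 2, by positivity, fun m v hmv => h m v ?_⟩⟩
    have := dist_triangle (pos m v) y x
    rw [Metric.mem_ball] at hy
    linarith
  let B : Set (Fin n → ℝ) := {x | ∃ r, dist x x < r ∧ Disjoint (Metric.ball x r) S ∧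
    ∃ m v, pos m v ∈ Metric.ball x r ∧ ¬ Bounds m (pt v) S}
  have hBG : ∀ x ∈ B, ∃ r > 0, ∀ y ∈ Metric.ball x r, y ∉ G := by
    rintro x ⟨r, hr, hd, m, v, hmv, hnb⟩
    rw [dist_self] at hr
    refine ⟨r, hr, ?_⟩
    rintro y hy ⟨ε, hε, h⟩
    obtain ⟨M, hM⟩ := dense_pos (Metric.isOpen_ball.inter Metric.isOpen_ball :
      IsOpen (Metric.ball x r ∩ Metric.ball y ε)) ⟨hy, Metric.mem_ball_self hε⟩
    obtain ⟨v', hv'⟩ := hM (m + M) (by omega)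
    have h1 := h _ _ hv'.2
    have h2 := bounds_ball hd (m := m + M) (v := fun i => 2 ^ M * v i) (v' := v')
      (by rwa [pos_sdk]) hv'.1
    have h3 := h2.add h1
    rw [add_assoc, add_self, add_zero, ← sdk_pt, bounds_sdk] at h3
    exact hnb h3
  have hcov : ∀ x ∈ Sᶜ, x ∉ G → x ∈ B := by
    intro x hx hxG
    obtain ⟨r, hr, hr'⟩ := Metric.isOpen_iff.1 hS.isClosed.isOpen_compl x hx
    refine ⟨r, by simpa using hr, Set.subset_compl_iff_disjoint_right.1 hr', ?_⟩
    by_contra! hcon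
    exact hxG ⟨r, hr, fun m v h => hcon m v h⟩
  have hopen : IsOpen (Sᶜ \ G) := by
    rw [Metric.isOpen_iff]
    rintro x ⟨hx, hxG⟩
    obtain ⟨r, hr, h⟩ := hBG x (hcov x hx hxG)
    obtain ⟨r', hr', h'⟩ := Metric.isOpen_iff.1 hS.isClosed.isOpen_compl x hx
    refine ⟨min r r', lt_min hr hr', fun y hy => ⟨h' ?_, h y ?_⟩⟩
    · exact Metric.ball_subset_ball (min_le_right _ _) hy
    · exact Metric.ball_subset_ball (min_le_left _ _) hy
  have hfar : (fun _ => R + 1 : Fin n → ℝ) ∈ Sᶜ ∩ G := by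
    refine ⟨fun h => ?_, 1, one_pos, fun m v hmv => bounds_far (i := i0) hR ?_⟩
    · have := hR _ h
      linarith
    · have := (dist_pi_lt_iff one_pos).1 hmv i0
      rw [Real.dist_eq, abs_lt] at this
      linarith
  have hbad : pos m v ∈ Sᶜ ∩ (Sᶜ \ G) := by
    refine ⟨hv, hv, ?_⟩
    rintro ⟨ε, hε, h⟩
    exact hnb (h m v (by simpa using hε))
  obtain ⟨x, _, h1, h2⟩ := hconn G (Sᶜ \ G) hG hopen
    (fun x hx => by by_cases h : x ∈ G; exacts [Or.inl h, Or.inr ⟨hx, h⟩]) ⟨_, hfar⟩ ⟨_, hbad⟩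
  exact h2.2 h1

end JB

namespace JB
variable {n : ℕ}

lemma bounds_zero (m : ℕ) (S : Set (Fin n → ℝ)) : Bounds m 0 S :=
  ⟨0, 0, fun w hw => absurd rfl hw, bd_zero⟩

lemma vertex_of_dim {w : Fin n → ℤ} (h : dim w = 0) : w = fun i => 2 * (w i / 2) := by
  funext i
  simp only [dim, Finset.card_eq_zero, Finset.filter_eq_empty_iff] at h
  have := h (Finset.mem_univ i)
  rw [not_not] at this
  grind

lemma Hom.add {d : ℕ} {a b : Chain n} (ha : Hom d a) (hb : Hom d b) : Hom d (a + b) := by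
  intro w hw
  by_cases h : a w = 0
  · rw [Pi.add_apply, h, zero_add] at hw; exact hb w hw
  · exact ha w h

lemma bounds_of_finite {m : ℕ} {S : Set (Fin n → ℝ)}
    (hpt : ∀ v, pos m v ∉ S → Bounds m (pt v) S) (s : Finset (Fin n → ℤ)) :
    ∀ c : Chain n, (∀ w, c w ≠ 0 → w ∈ s) → Hom 0 c → Avoid m c S → Bounds m c S := by
  induction s using Finset.induction_on with
  | empty =>
    intro c hc _ _
    have : c = 0 := by
      funext w
      by_contra h
      exact absurd (hc w h) (Finset.notMem_empty _)
    rw [this]; exact bounds_zero m S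
  | insert a s ha ih =>
    intro c hc hh hav
    by_cases h0 : c a = 0
    · refine ih c (fun w hw => ?_) hh hav
      rcases Finset.mem_insert.1 (hc w hw) with rfl | h
      · exact absurd h0 hw
      · exact h
    · have e := vertex_of_dim (hh a h0)
      have h1 : pos m (fun i => a i / 2) ∉ S := by
        have := hav a h0
        rw [e] at this
        exact fun h => Set.disjoint_left.1 this (mem_cell_vertex.2 rfl) h
      have h2 := hpt _ h1
      have h3 : Bounds m (c + pt (fun i => a i / 2)) S := by
        refine ih _ (fun w hw => ?_) (hh.add (hom_pt _)) (hav.add (avoid_pt h1))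
        by_cases hwa : w = a
        · subst hwa
          exfalso; apply hw
          have h4 : c w = 1 := (by decide : ∀ x : ZMod 2, x ≠ 0 → x = 1) _ h0
          rw [Pi.add_apply, h4, pt, if_pos e]
          exact CharTwo.add_self_eq_zero _
        · have h5 : pt (fun i => a i / 2) w = 0 := by
            rw [pt, ← e, if_neg hwa]
          rw [Pi.add_apply, h5, add_zero] at hw
          exact (Finset.mem_insert.1 (hc w hw)).resolve_left hwa
      have h6 := h3.add h2
      rwa [add_assoc, add_self, add_zero] at h6

lemma finite_bd {c : Chain n} (hc : (Function.support c).Finite) :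
    (Function.support (bd c)).Finite := by
  have : Function.support (bd c) ⊆ ⋃ i : Fin n,
      ((fun w => Function.update w i (w i - 1)) '' Function.support c ∪
        (fun w => Function.update w i (w i + 1)) '' Function.support c) := by
    intro w hw
    obtain ⟨i, z, he, hz, h⟩ := bd_ne_zero hw
    refine Set.mem_iUnion.2 ⟨i, ?_⟩
    rcases hz with rfl | rfl
    · exact Or.inl ⟨_, h, by simp⟩
    · exact Or.inr ⟨_, h, by simp⟩
  exact (Set.finite_iUnion fun i => (hc.image _).union (hc.image _)).subset this

open Classical in
lemma bounds_of_connected (hn : 0 < n) {S : Set (Fin n → ℝ)} (hS : IsCompact S)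
    (hconn : IsPreconnected Sᶜ) {m : ℕ} {g : Chain n} (hg : Hom 0 g) (hav : Avoid m g S) :
    Bounds m g S := by
  let i0 : Fin n := ⟨0, hn⟩
  have hu : ¬ Even (1 : ℤ) := by decide
  let e : Chain n := push i0 1 g
  have he : bd e = g := bd_push_hom_zero hu hg
  have heh : Hom 1 e := by
    intro w hw
    simp only [e, push] at hw
    split_ifs at hw with hev
    · exact absurd rfl hw
    · obtain ⟨j, hj, hne⟩ := Finset.exists_ne_zero_of_sum_ne_zero hw
      have h1 := hg _ hne
      have h2 : Even j := (Finset.mem_filter.1 hj).2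
      have h3 := dim_update (w := Function.update w i0 j) (i := i0) (z := w i0) (by simpa using h2) hev
      simpa [h1] using h3
  let e' : Chain n := fun w => if Disjoint (cell m w) S then e w else 0
  have he' : Avoid m e' S := by
    intro w hw
    simp only [e'] at hw
    split_ifs at hw with h
    · exact h
    · exact absurd rfl hw
  have heh' : Hom (0 + 1) e' := by
    intro w hw
    apply heh w
    simp only [e'] at hw
    split_ifs at hw with h
    · exact hw
    · exact absurd rfl hw
  have hfin : (Function.support (e + e')).Finite := by
    refine (finite_cells m hS.isBounded).subset ?_
    intro w hw hd
    apply hw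
    simp only [Pi.add_apply, e', if_pos hd]
    exact CharTwo.add_self_eq_zero _
  have hfin' := finite_bd hfin
  rw [bd_add, he] at hfin'
  have h1 : Bounds m (g + bd e') S := by
    refine bounds_of_finite (fun v hv => bounds_pt_of_connected hn hS hconn hv) hfin'.toFinset _
      (fun w hw => by simpa using hw) (hg.add heh'.bd) (hav.add he'.bd)
  have h2 := h1.add (bounds_bd he')
  rwa [add_assoc, add_self, add_zero] at h2

lemma Spherical.not_connected (hn : 0 < n) {S : Set (Fin n → ℝ)} (hS : IsCompact S)
    (h : Spherical S 0) : ¬ IsPreconnected Sᶜ := by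
  obtain ⟨m, g, -, hg, hav, hnb, -⟩ := h
  exact fun hc => hnb (bounds_of_connected hn hS hc hg hav)

lemma exterior_connected (hn : 2 ≤ n) {R : ℝ} (hR : 0 ≤ R) :
    IsPreconnected {x : Fin n → ℝ | R < ‖x‖} := by
  have hrank : 1 < Module.rank ℝ (Fin n → ℝ) := by
    rw [rank_fin_fun]; exact_mod_cast hn
  have h := (isPathConnected_compl_singleton_of_one_lt_rank hrank
    (0 : Fin n → ℝ)).isConnected.isPreconnected
  have h2 := h.image (fun x => (1 + R / ‖x‖) • x) (by
    refine ContinuousOn.smul (continuousOn_const.add (continuousOn_const.div continuous_norm.continuousOn ?_))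
      continuousOn_id
    intro x hx
    exact norm_ne_zero_iff.2 hx)
  convert h2 using 1
  ext y
  simp only [Set.mem_ofPred_eq, Set.mem_image]
  constructor
  · intro hy
    have hy0 : 0 < ‖y‖ := hR.trans_lt hy
    have h3 : 0 < 1 - R / ‖y‖ := by rw [sub_pos, div_lt_one hy0]; exact hy
    have h4 : ‖(1 - R / ‖y‖) • y‖ = ‖y‖ - R := by
      rw [norm_smul, Real.norm_of_nonneg h3.le]; field_simp
    have h5 : ‖y‖ - R ≠ 0 := by linarith
    refine ⟨(1 - R / ‖y‖) • y, ?_, ?_⟩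
    · intro h
      rw [Set.mem_singleton_iff.1 h, norm_zero] at h4
      linarith
    · rw [h4, smul_smul]
      have : (1 + R / (‖y‖ - R)) * (1 - R / ‖y‖) = 1 := by field_simp; ring
      rw [this, one_smul]
  · rintro ⟨x, hx, rfl⟩
    have hx0 : 0 < ‖x‖ := norm_pos_iff.2 hx
    rw [norm_smul, Real.norm_of_nonneg (by positivity)]
    have : (1 + R / ‖x‖) * ‖x‖ = ‖x‖ + R := by field_simp
    linarith

lemma pi_main (hn : 2 ≤ n) {S : Set (Fin n → ℝ)} (hS : IsCompact S) (hsph : Spherical S 0)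
    (hloc : ∀ x ∈ S, ∀ O, IsOpen O → x ∈ O → ∃ D, D ⊆ S ∧ IsCompact D ∧ Acyclic D ∧ S \ O ⊆ D) :
    ∃ U V : Set (Fin n → ℝ),
      IsOpen U ∧ IsOpen V ∧ IsConnected U ∧ IsConnected V ∧
      Disjoint U V ∧ U ∪ V = Sᶜ ∧
      Bornology.IsBounded U ∧ ¬ Bornology.IsBounded V ∧
      frontier U = S ∧ frontier V = S := by
  obtain ⟨R₀, hR₀⟩ := hS.isBounded.subset_closedBall 0
  set R := max R₀ 0 with hRdef
  have hR : 0 ≤ R := le_max_right _ _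
  have hSR : S ⊆ Metric.closedBall 0 R := hR₀.trans (Metric.closedBall_subset_closedBall (le_max_left _ _))
  let E : Set (Fin n → ℝ) := {x | R < ‖x‖}
  have hES : E ⊆ Sᶜ := by
    intro x hx hxS
    have := hSR hxS
    rw [mem_closedBall_zero_iff] at this
    exact absurd hx (not_lt.2 this)
  have hE : IsPreconnected E := exterior_connected hn hR
  have i0 : Fin n := ⟨0, by omega⟩
  have hbig : ∀ r : ℝ, 0 ≤ r → ‖(fun _ => r : Fin n → ℝ)‖ = r := by
    intro r hr
    have : Nonempty (Fin n) := ⟨i0⟩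
    rw [pi_norm_const, Real.norm_of_nonneg hr]
  let x0 : Fin n → ℝ := fun _ => R + 1
  have hx0 : x0 ∈ E := by
    change R < ‖x0‖
    rw [hbig _ (by linarith)]; linarith
  have hSo : IsOpen Sᶜ := hS.isClosed.isOpen_compl
  let V := connectedComponentIn Sᶜ x0
  have hVo : IsOpen V := hSo.connectedComponentIn
  have hVS : V ⊆ Sᶜ := connectedComponentIn_subset _ _
  have hEV : E ⊆ V := hE.subset_connectedComponentIn hx0 hES
  have hVc : IsConnected V := isConnected_connectedComponentIn_iff.2 (hES hx0)
  have hx0V : x0 ∈ V := hEV hx0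
  let U := Sᶜ \ V
  have hUS : U ⊆ Sᶜ := Set.sdiff_subset
  have hdUV : Disjoint U V := Set.disjoint_sdiff_left
  have hUV : U ∪ V = Sᶜ := Set.sdiff_union_of_subset hVS
  have hUo : IsOpen U := by
    rw [isOpen_iff_forall_mem_open]
    rintro x ⟨hx, hxV⟩
    refine ⟨connectedComponentIn Sᶜ x, ?_, hSo.connectedComponentIn, mem_connectedComponentIn hx⟩
    intro y hy
    refine ⟨connectedComponentIn_subset _ _ hy, fun hyV => hxV ?_⟩
    have e1 := connectedComponentIn_eq hy
    have e2 := connectedComponentIn_eq hyV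
    change x ∈ connectedComponentIn Sᶜ x0
    rw [e2, ← e1]
    exact mem_connectedComponentIn hx
  have hUb : Bornology.IsBounded U := by
    refine (Metric.isBounded_closedBall (x := (0 : Fin n → ℝ)) (r := R)).subset ?_
    rintro x ⟨hx, hxV⟩
    rw [mem_closedBall_zero_iff]
    exact not_lt.1 fun h => hxV (hEV h)
  have hVb : ¬ Bornology.IsBounded V := by
    intro h
    obtain ⟨r, hr⟩ := h.subset_closedBall 0
    have h1 : (fun _ => max r R + 1 : Fin n → ℝ) ∈ V := by
      apply hEV
      change R < ‖_‖
      rw [hbig _ (by have := le_max_right r R; linarith)]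
      have := le_max_right r R; linarith
    have h2 := hr h1
    rw [mem_closedBall_zero_iff, hbig _ (by have := le_max_right r R; linarith)] at h2
    have := le_max_left r R; linarith
  have hUne : U.Nonempty := by
    by_contra h
    rw [Set.not_nonempty_iff_eq_empty] at h
    apply hsph.not_connected (by omega) hS
    rw [← hUV, h, Set.empty_union]
    exact hVc.isPreconnected
  have hUpre : IsPreconnected U := by
    intro u v hu hv huv hnu hnv
    by_contra hcon
    have hdis : Disjoint (U ∩ u) (U ∩ v) := by
      rw [Set.disjoint_left]
      rintro x ⟨h1, h2⟩ ⟨h3, h4⟩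
      exact hcon ⟨x, h1, h2, h4⟩
    have hcov : Sᶜ ⊆ (U ∩ u) ∪ ((U ∩ v) ∪ V) := by
      rw [← hUV]
      rintro x (h | h)
      · rcases huv h with h' | h'
        · exact Or.inl ⟨h, h'⟩
        · exact Or.inr (Or.inl ⟨h, h'⟩)
      · exact Or.inr (Or.inr h)
    have hcov' : Sᶜ ⊆ (U ∩ v) ∪ ((U ∩ u) ∪ V) := by
      refine hcov.trans ?_
      rw [Set.union_left_comm]
    have c1 : Clopen (U ∩ u) S := ⟨hUo.inter hu, (U ∩ v) ∪ V, (hUo.inter hv).union hVo,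
      Set.disjoint_union_right.2 ⟨hdis, hdUV.mono_left Set.inter_subset_left⟩, hcov⟩
    have c2 : Clopen (U ∩ v) S := ⟨hUo.inter hv, (U ∩ u) ∪ V, (hUo.inter hu).union hVo,
      Set.disjoint_union_right.2 ⟨hdis.symm, hdUV.mono_left Set.inter_subset_left⟩, hcov'⟩
    exact hsph.no_two c1 c2 (Set.inter_subset_left.trans hUS) (Set.inter_subset_left.trans hUS)
      (hUb.subset Set.inter_subset_left) (hUb.subset Set.inter_subset_left) hdis hnu hnv
  have hfront : ∀ A B : Set (Fin n → ℝ), IsOpen A → IsOpen B → Disjoint A B → A ∪ B = Sᶜ →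
      frontier A ⊆ S := by
    intro A B hA hB hAB hABS x hx
    by_contra hxS
    have h1 : x ∈ A ∪ B := by rw [hABS]; exact hxS
    rw [hA.frontier_eq] at hx
    rcases h1 with h | h
    · exact hx.2 h
    · exact Set.disjoint_left.1 (hAB.closure_left hB) hx.1 h
  have hfU : frontier U ⊆ S := hfront U V hUo hVo hdUV hUV
  have hfV : frontier V ⊆ S := hfront V U hVo hUo hdUV.symm (by rw [Set.union_comm]; exact hUV)
  refine ⟨U, V, hUo, hVo, ⟨hUne, hUpre⟩, hVc, hdUV, hUV, hUb, hVb, hfU.antisymm ?_,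
    hfV.antisymm ?_⟩
  · intro x hx
    by_contra hxU
    obtain ⟨D, hDS, hDc, hDa, hSD⟩ := hloc x hx (frontier U)ᶜ isClosed_frontier.isOpen_compl hxU
    have hfD : frontier U ⊆ D := fun y hy => hSD ⟨hfU hy, fun h => h hy⟩
    have : Clopen U D := by
      refine ⟨hUo, (closure U)ᶜ, isClosed_closure.isOpen_compl,
        Set.disjoint_compl_right_iff_subset.2 subset_closure, ?_⟩
      intro y hy
      by_cases h : y ∈ U
      · exact Or.inl h
      · refine Or.inr fun hc => hy (hfD ?_)
        rw [hUo.frontier_eq]; exact ⟨hc, h⟩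
    have := hDa.no_bounded this (hUS.trans (Set.compl_subset_compl.2 hDS)) hUb
    exact hUne.ne_empty this
  · intro x hx
    by_contra hxV
    obtain ⟨D, hDS, hDc, hDa, hSD⟩ := hloc x hx (frontier V)ᶜ isClosed_frontier.isOpen_compl hxV
    have hfD : frontier V ⊆ D := fun y hy => hSD ⟨hfV hy, fun h => h hy⟩
    have hcl : Clopen (D ∪ closure V)ᶜ D := by
      refine ⟨(hDc.isClosed.union isClosed_closure).isOpen_compl, V, hVo, ?_, ?_⟩
      · rw [Set.disjoint_compl_left_iff_subset]
        exact subset_closure.trans Set.subset_union_right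
      · intro y hy
        by_cases h : y ∈ V
        · exact Or.inr h
        · refine Or.inl ?_
          rintro (h' | h')
          · exact hy h'
          · apply hy; apply hfD; rw [hVo.frontier_eq]; exact ⟨h', h⟩
    have := hDa.no_bounded hcl (Set.compl_subset_compl.2 Set.subset_union_left) (by
      refine (Metric.isBounded_closedBall (x := (0 : Fin n → ℝ)) (r := R)).subset ?_
      intro y hy
      rw [mem_closedBall_zero_iff]
      exact not_lt.1 fun h => hy (Or.inr (subset_closure (hEV h))))
    obtain ⟨y, hy⟩ := hUne
    have hy' : y ∈ (D ∪ closure V)ᶜ := by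
      rintro (h | h)
      · exact hUS hy (hDS h)
      · exact Set.disjoint_left.1 (hdUV.closure_right hUo) hy h
    rw [this] at hy'
    exact hy'

end JB

namespace JB
variable {n : ℕ}

lemma local_disc {n' : ℕ} {F : Metric.sphere (0 : EuclideanSpace ℝ (Fin (n' + 1))) 1 →
    (Fin (n' + 1) → ℝ)} (hF : Continuous F) (hinj : Function.Injective F)
    (y : Metric.sphere (0 : EuclideanSpace ℝ (Fin (n' + 1))) 1) {O : Set (Fin (n' + 1) → ℝ)}
    (hO : IsOpen O) (hy : F y ∈ O) :
    ∃ D, D ⊆ Set.range F ∧ IsCompact D ∧ Acyclic D ∧ Set.range F \ O ⊆ D := by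
  haveI : Fact (Module.finrank ℝ (EuclideanSpace ℝ (Fin (n' + 1))) = n' + 1) := ⟨by simp⟩
  let st := stereographic' n' y
  have hsrc : st.source = {y}ᶜ := stereographic'_source y
  have htgt : st.target = Set.univ := stereographic'_target y
  have hK : IsCompact ((F ⁻¹' O)ᶜ) := (hO.preimage hF).isClosed_compl.isCompact
  have hKs : (F ⁻¹' O)ᶜ ⊆ st.source := by
    rw [hsrc, Set.compl_subset_compl]
    rintro _ rfl
    exact hy
  have hK' := hK.image_of_continuousOn (st.continuousOn.mono hKs)
  obtain ⟨R₀, hR₀⟩ := hK'.isBounded.subset_closedBall 0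
  let R := max R₀ 0
  have hR : st '' (F ⁻¹' O)ᶜ ⊆ Metric.closedBall 0 R :=
    hR₀.trans (Metric.closedBall_subset_closedBall (le_max_left _ _))
  have hsymm : Continuous st.symm := by
    rw [← continuousOn_univ, ← htgt]; exact st.continuousOn_symm
  have hsinj : Function.Injective st.symm := by
    rw [← Set.injOn_univ, ← htgt]
    exact st.symm.injOn
  let L := EuclideanSpace.equiv (Fin n') ℝ
  let C : Set (Fin n' → ℝ) := L '' Metric.closedBall 0 R
  let φ : (Fin n' → ℝ) → (Fin (n' + 1) → ℝ) := fun x => F (st.symm (L.symm x))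
  have hφ : Continuous φ := hF.comp (hsymm.comp L.symm.continuous)
  have hφi : Function.Injective φ := hinj.comp (hsinj.comp L.symm.injective)
  have hC : IsCompact C := (isCompact_closedBall _ _).image L.continuous
  have hCc : Convex ℝ C := (convex_closedBall _ _).linear_image L.toLinearEquiv.toLinearMap
  have hCn : C.Nonempty := (Metric.nonempty_closedBall.2 (le_max_right _ _)).image _
  refine ⟨φ '' C, ?_, hC.image hφ, acyclic_convex n' C φ hC hCc hCn hφ.continuousOn hφi.injOn, ?_⟩
  · rintro _ ⟨x, _, rfl⟩
    exact ⟨_, rfl⟩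
  · rintro _ ⟨⟨z, rfl⟩, hz⟩
    refine ⟨L (st z), ⟨st z, hR ⟨z, hz, rfl⟩, rfl⟩, ?_⟩
    simp only [φ, ContinuousLinearEquiv.symm_apply_apply]
    rw [st.left_inv (hKs hz)]

end JB

theorem jordan_brouwer_separation (n : ℕ) (hn : 2 ≤ n)
    (S : Set (EuclideanSpace ℝ (Fin n)))
    (f : Metric.sphere (0 : EuclideanSpace ℝ (Fin n)) 1 → EuclideanSpace ℝ (Fin n))
    (hf : Continuous f) (hinj : Function.Injective f) (hS : S = Set.range f) :
    ∃ U V : Set (EuclideanSpace ℝ (Fin n)),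
      IsOpen U ∧ IsOpen V ∧ IsConnected U ∧ IsConnected V ∧
      Disjoint U V ∧ U ∪ V = Sᶜ ∧
      Bornology.IsBounded U ∧ ¬ Bornology.IsBounded V ∧
      frontier U = S ∧ frontier V = S := by
  classical
  obtain ⟨n', rfl⟩ : ∃ n', n = n' + 1 := ⟨n - 1, by omega⟩
  let L := EuclideanSpace.equiv (Fin (n' + 1)) ℝ
  let H := L.toHomeomorph
  let F : Metric.sphere (0 : EuclideanSpace ℝ (Fin (n' + 1))) 1 → (Fin (n' + 1) → ℝ) :=
    fun x => L (f x)
  have hF : Continuous F := L.continuous.comp hf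
  have hFi : Function.Injective F := L.injective.comp hinj
  have hmem : ∀ x : Fin (n' + 1) → ℝ, x ∈ JB.Sph (n' + 1) ↔
      L.symm x ∈ Metric.sphere (0 : EuclideanSpace ℝ (Fin (n' + 1))) 1 := by
    intro x
    rw [mem_sphere_zero_iff_norm, EuclideanSpace.norm_eq, Real.sqrt_eq_one]
    simp only [Real.norm_eq_abs, sq_abs]
    rfl
  let φ : (Fin (n' + 1) → ℝ) → (Fin (n' + 1) → ℝ) := fun x =>
    if h : L.symm x ∈ Metric.sphere (0 : EuclideanSpace ℝ (Fin (n' + 1))) 1 then F ⟨L.symm x, h⟩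
    else 0
  have hφr : φ '' JB.Sph (n' + 1) = Set.range F := by
    ext y
    constructor
    · rintro ⟨x, hx, rfl⟩
      simp only [φ, dif_pos ((hmem x).1 hx)]
      exact ⟨_, rfl⟩
    · rintro ⟨x, rfl⟩
      have hx : L.symm (L x) ∈ Metric.sphere (0 : EuclideanSpace ℝ (Fin (n' + 1))) 1 := by
        rw [L.symm_apply_apply]; exact x.2
      refine ⟨L x, (hmem _).2 hx, ?_⟩
      simp only [φ, dif_pos hx]
      congr 1
  have hφc : ContinuousOn φ (JB.Sph (n' + 1)) := by
    rw [continuousOn_iff_continuous_domRestrict]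
    have : (JB.Sph (n' + 1)).domRestrict φ = fun x : JB.Sph (n' + 1) => F ⟨L.symm x, (hmem x).1 x.2⟩ := by
      funext x
      simp only [Set.domRestrict_apply, φ, dif_pos ((hmem x).1 x.2)]
    rw [this]
    exact hF.comp ((L.symm.continuous.comp continuous_subtype_val).subtype_mk _)
  have hφi : Set.InjOn φ (JB.Sph (n' + 1)) := by
    intro x hx y hy h
    simp only [φ, dif_pos ((hmem x).1 hx), dif_pos ((hmem y).1 hy)] at h
    exact L.symm.injective (congrArg Subtype.val (hFi h))
  have hsph := JB.spherical_sphere (n := n' + 1) (n' + 1) 0 (by omega) φ hφc hφi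
  rw [hφr] at hsph
  have hK : IsCompact (Set.range F) := by
    rw [← hφr]; exact (JB.isCompact_Sph _).image_of_continuousOn hφc
  obtain ⟨U, V, hUo, hVo, hUc, hVc, hd, hUV, hUb, hVb, hfU, hfV⟩ :=
    JB.pi_main hn hK hsph (by
      rintro _ ⟨y, rfl⟩ O hO hy
      exact JB.local_disc hF hFi y hO hy)
  have hSF : H ⁻¹' Set.range F = S := by
    rw [hS]
    ext x
    constructor
    · rintro ⟨y, hy⟩
      exact ⟨y, L.injective hy⟩
    · rintro ⟨y, rfl⟩
      exact ⟨y, rfl⟩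
  have hpre : ∀ A : Set (Fin (n' + 1) → ℝ), H ⁻¹' A = L.symm '' A := by
    intro A
    exact (L.toEquiv.image_symm_eq_preimage A).symm
  have himg : ∀ A : Set (Fin (n' + 1) → ℝ), L '' (H ⁻¹' A) = A := by
    intro A
    exact Set.image_preimage_eq A L.surjective
  refine ⟨H ⁻¹' U, H ⁻¹' V, hUo.preimage H.continuous, hVo.preimage H.continuous, ?_, ?_,
    hd.preimage _, ?_, ?_, ?_, ?_, ?_⟩
  · rw [hpre]; exact hUc.image _ L.symm.continuous.continuousOn
  · rw [hpre]; exact hVc.image _ L.symm.continuous.continuousOn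
  · rw [← Set.preimage_union, hUV, Set.preimage_compl, hSF]
  · rw [hpre]; exact L.symm.toContinuousLinearMap.lipschitz.isBounded_image hUb
  · intro h
    apply hVb
    rw [← himg V]
    exact L.toContinuousLinearMap.lipschitz.isBounded_image h
  · rw [← H.preimage_frontier, hfU, hSF]
  · rw [← H.preimage_frontier, hfV, hSF]
end
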